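/- arXiv:1708.05322 — 7 statements merged into one kernel-verified Lean document; each statement's English description precedes it below -/
import Mathlib

section
/- An ideal I on ℕ is F_σ (as a subset of the Cantor space 2^ℕ, identifying subsets of ℕ with their characteristic functions) if and only if there exists a lower-semicontinuous submeasure φ on P(ℕ) such that I = Fin(φ) = {A ⊆ ℕ : φ(A) < ∞}. -/
/-- `x` is a subset of `y`, for subsets of `α` coded as characteristic functions. -/
def subB {α : Type} (x y : α → Bool) : Prop := ∀ a, x a = true → y a = true

/-- Union of two subsets of `α` coded as characteristic functions. -/
def unionB {α : Type} (x y : α → Bool) : α → Bool := fun a => x a || y a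

/-- The set coded by a characteristic function. -/
def suppB {α : Type} (x : α → Bool) : Set α := {a | x a = true}

/-- The coded set is infinite. -/
def InfiniteB {α : Type} (x : α → Bool) : Prop := (suppB x).Infinite

/-- `I` is an ideal: closed under subsets and (finite) unions. -/
def IsIdealB {α : Type} (I : Set (α → Bool)) : Prop :=
  (∀ x ∈ I, ∀ y, subB y x → y ∈ I) ∧ ∀ x ∈ I, ∀ y ∈ I, unionB x y ∈ I

/-- `I` is tall: every infinite set has an infinite subset in `I`. -/
def IsTallB {α : Type} (I : Set (α → Bool)) : Prop :=
  ∀ x, InfiniteB x → ∃ y ∈ I, InfiniteB y ∧ subB y x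

/-- `I` contains all finite sets. -/
def ContainsFinB {α : Type} (I : Set (α → Bool)) : Prop :=
  ∀ x : α → Bool, (suppB x).Finite → x ∈ I

/-- `I` is an `F_σ` subset of the Cantor space `α → Bool`. -/
def IsFsigmaB {α : Type} (I : Set (α → Bool)) : Prop :=
  ∃ F : ℕ → Set (α → Bool), (∀ n, IsClosed (F n)) ∧ I = ⋃ n, F n

/-- Katětov order: `I ≤_K J` via some `f` with `f⁻¹[A] ∈ J` for all `A ∈ I`. -/
def KatLE {α β : Type} (I : Set (α → Bool)) (J : Set (β → Bool)) : Prop :=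
  ∃ f : β → α, ∀ x ∈ I, (fun b => x (f b)) ∈ J


/-- `x` restricted to `{0, …, n-1}`. -/
def restrB (x : ℕ → Bool) (n : ℕ) : ℕ → Bool := fun k => x k && decide (k < n)

/-- `φ` is a lower-semicontinuous submeasure on `P(ℕ)`. -/
def IsLSCSubmeasure (φ : (ℕ → Bool) → ENNReal) : Prop :=
  φ (fun _ => false) = 0 ∧
  (∀ x y, subB x y → φ x ≤ φ y) ∧
  (∀ x y, φ (unionB x y) ≤ φ x + φ y) ∧
  ∀ x, Filter.Tendsto (fun n => φ (restrB x n)) Filter.atTop (nhds (φ x))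

/-!
If `I = Fin(φ)`, then `I` is the union of the sets `{φ ≤ n}`, which are closed because `φ` is lower
semicontinuous. Conversely, let `I` be the union of closed sets `F n`. Starting from `{∅}`, let
`C (n + 1)` consist of all subsets of unions of two members of `C n ∪ F n`. Compactness keeps the
`C n` closed, they exhaust `I`, and `φ x = min {n | x ∈ C n}` is the required submeasure: for
`1 ≤ m, n`, the union of a member of `C m` and a member of `C n` lies in
`C (max m n + 1) ⊆ C (m + n)`.

With `false < true`, inclusion, union and `∅` are `≤`, `⊔` and `⊥` in the compact lattice
`ℕ → Bool`, and the argument works in every compact topological semilattice with closed order.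
-/

open Filter Set Topology
open scoped ENNReal SetFamily

section EntryIndex

variable {X : Type*} {C : ℕ → Set X} {x : X}

/-- The least `n` with `x ∈ C n`, or `⊤` if there is none. It turns an increasing sequence of sets
into a function whose sublevel sets are the given ones. -/
noncomputable def entryIndex (C : ℕ → Set X) (x : X) : ℕ∞ :=
  ⨅ (n : ℕ) (_ : x ∈ C n), (n : ℕ∞)

theorem entryIndex_le {n : ℕ} (hx : x ∈ C n) : entryIndex C x ≤ n :=
  iInf₂_le (f := fun (n : ℕ) (_ : x ∈ C n) => (n : ℕ∞)) n hx

theorem entryIndex_lt_iff {b : ℕ∞} : entryIndex C x < b ↔ ∃ n : ℕ, x ∈ C n ∧ (n : ℕ∞) < b := by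
  simp only [entryIndex, iInf_lt_iff, exists_prop]

theorem entryIndex_le_natCast_iff (hC : Monotone C) {n : ℕ} :
    entryIndex C x ≤ n ↔ x ∈ C n := by
  refine ⟨fun h => ?_, entryIndex_le⟩
  have hlt : entryIndex C x < (n + 1 : ℕ) := h.trans_lt (by exact_mod_cast n.lt_succ_self)
  obtain ⟨m, hxm, hmn⟩ := entryIndex_lt_iff.mp hlt
  exact hC (Nat.lt_succ_iff.mp (by exact_mod_cast hmn)) hxm

theorem entryIndex_lt_top_iff : entryIndex C x < ⊤ ↔ x ∈ ⋃ n, C n := by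
  simp only [entryIndex_lt_iff, ENat.natCast_lt_top, and_true, mem_iUnion]

theorem lowerSemicontinuous_entryIndex [TopologicalSpace X] (hC : Monotone C)
    (hclosed : ∀ n, IsClosed (C n)) : LowerSemicontinuous (entryIndex C) := by
  refine lowerSemicontinuous_iff_isClosed_preimage.mpr fun y => ?_
  cases y with
  | top => simp only [Iic_top, preimage_univ, isClosed_univ]
  | coe n =>
    have hpre : entryIndex C ⁻¹' Iic (n : ℕ∞) = C n :=
      Set.ext fun _ => entryIndex_le_natCast_iff hC
    exact hpre ▸ hclosed n

theorem entryIndex_sup_le [Max X]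
    (hsup : ∀ {m n x y}, x ∈ C m → y ∈ C n → x ⊔ y ∈ C (m + n)) (x y : X) :
    entryIndex C (x ⊔ y) ≤ entryIndex C x + entryIndex C y := by
  simp only [entryIndex, ENat.iInf_add, ENat.add_iInf]
  exact le_iInf₂ fun n hy => le_iInf₂ fun m hx => by exact_mod_cast entryIndex_le (hsup hx hy)

end EntryIndex

theorem setOf_lt_top_eq_iUnion_preimage_Iic {X : Type*} (φ : X → ℝ≥0∞) :
    {x | φ x < ⊤} = ⋃ n : ℕ, φ ⁻¹' Iic (n : ℝ≥0∞) := by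
  ext x
  simp only [mem_ofPred_eq, mem_iUnion, mem_preimage, mem_Iic]
  refine ⟨fun h => ?_, fun ⟨n, hn⟩ => hn.trans_lt (ENNReal.natCast_lt_top n)⟩
  exact (ENNReal.exists_nat_gt h.ne).imp fun _ => le_of_lt

theorem isClosed_lowerClosure_of_isCompact {X : Type*} [Preorder X] [TopologicalSpace X]
    [OrderClosedTopology X] {K : Set X} (hK : IsCompact K) :
    IsClosed (lowerClosure K : Set X) := by
  have : CompactSpace K := isCompact_iff_compactSpace.mp hK
  have hrel : IsClosed {p : K × X | p.2 ≤ p.1} := isClosed_le (by fun_prop) (by fun_prop)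
  have hproj : Prod.snd '' {p : K × X | p.2 ≤ p.1} = lowerClosure K := by
    ext x
    simp
  exact hproj ▸ isClosedMap_snd_of_compactSpace _ hrel

theorem isCompact_sups {L : Type*} [SemilatticeSup L] [TopologicalSpace L] [ContinuousSup L]
    {s t : Set L} (hs : IsCompact s) (ht : IsCompact t) : IsCompact (s ⊻ t) := by
  rw [← image_sup_prod, ← image_uncurry_prod]
  exact (hs.prod ht).image continuous_sup

theorem tendsto_of_lowerSemicontinuousAt_of_le {ι X Y : Type*} [TopologicalSpace X]
    [LinearOrder Y] [TopologicalSpace Y] [OrderTopology Y] {l : Filter ι} {f : X → Y} {x : X}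
    {u : ι → X} (hf : LowerSemicontinuousAt f x) (hu : Tendsto u l (𝓝 x))
    (hle : ∀ i, f (u i) ≤ f x) : Tendsto (f ∘ u) l (𝓝 (f x)) :=
  tendsto_order.mpr
    ⟨fun y hy => hu.eventually (hf y hy), fun _ hy => .of_forall fun i => (hle i).trans_lt hy⟩

section Semilattice

variable {L : Type*} [SemilatticeSup L] [OrderBot L]

/-- A lower-semicontinuous submeasure on a topological join-semilattice. Lower semicontinuity is
meant topologically; `isLSCSubmeasure_iff` compares this with approximation by finite sets. -/
structure IsLatticeLSCSubmeasure [TopologicalSpace L] (φ : L → ℝ≥0∞) : Prop where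
  map_bot : φ ⊥ = 0
  monotone : Monotone φ
  map_sup_le (x y : L) : φ (x ⊔ y) ≤ φ x + φ y
  lowerSemicontinuous : LowerSemicontinuous φ

theorem isLatticeLSCSubmeasure_entryIndex [TopologicalSpace L] {C : ℕ → Set L} (hC : Monotone C)
    (hbot : ⊥ ∈ C 0) (hlower : ∀ n, IsLowerSet (C n))
    (hsup : ∀ {m n x y}, x ∈ C m → y ∈ C n → x ⊔ y ∈ C (m + n))
    (hclosed : ∀ n, IsClosed (C n)) :
    IsLatticeLSCSubmeasure fun x => (entryIndex C x : ℝ≥0∞) where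
  map_bot := by simpa using (entryIndex_le_natCast_iff hC).mpr hbot
  monotone := fun x y hxy =>
    ENat.toENNReal_mono (le_iInf₂ fun n hy => entryIndex_le (hlower n hxy hy))
  map_sup_le := fun x y => by exact_mod_cast entryIndex_sup_le hsup x y
  lowerSemicontinuous := ENat.continuous_toENNReal.comp_lowerSemicontinuous
    (lowerSemicontinuous_entryIndex hC hclosed) ENat.toENNReal_mono

/-- The increasing exhaustion, by lower sets, of the ideal generated by the sets `F n`: each term
is the lower closure of the joins of two elements of the preceding term or the corresponding
`F n`. Mazur's submeasure is its `entryIndex`. -/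
def mazurSequence (F : ℕ → Set L) : ℕ → Set L
  | 0 => {⊥}
  | n + 1 => lowerClosure ((mazurSequence F n ∪ F n) ⊻ (mazurSequence F n ∪ F n))

variable {F : ℕ → Set L} {m n : ℕ} {x y : L}

theorem mem_mazurSequence_zero : x ∈ mazurSequence F 0 ↔ x = ⊥ :=
  Iff.rfl

theorem mem_mazurSequence_succ : x ∈ mazurSequence F (n + 1) ↔
    ∃ a ∈ mazurSequence F n ∪ F n, ∃ b ∈ mazurSequence F n ∪ F n, x ≤ a ⊔ b := by
  simp only [mazurSequence, SetLike.mem_coe, mem_lowerClosure, mem_sups]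
  grind

theorem union_subset_mazurSequence_succ :
    mazurSequence F n ∪ F n ⊆ mazurSequence F (n + 1) :=
  fun x hx => mem_mazurSequence_succ.mpr ⟨x, hx, x, hx, le_sup_left⟩

theorem monotone_mazurSequence (F : ℕ → Set L) : Monotone (mazurSequence F) :=
  monotone_nat_of_le_succ fun _ => subset_union_left.trans union_subset_mazurSequence_succ

theorem isLowerSet_mazurSequence (F : ℕ → Set L) (n : ℕ) : IsLowerSet (mazurSequence F n) := by
  cases n with
  | zero => exact fun _ _ hle hx => le_bot_iff.mp (hle.trans_eq hx)
  | succ n => exact LowerSet.lower _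

theorem sup_mem_mazurSequence_add (hx : x ∈ mazurSequence F m) (hy : y ∈ mazurSequence F n) :
    x ⊔ y ∈ mazurSequence F (m + n) := by
  rcases m.eq_zero_or_pos with rfl | hm
  · rwa [mem_mazurSequence_zero.mp hx, bot_sup_eq, zero_add]
  rcases n.eq_zero_or_pos with rfl | hn
  · rwa [mem_mazurSequence_zero.mp hy, sup_bot_eq, add_zero]
  have hmono := monotone_mazurSequence F
  have hmax : x ⊔ y ∈ mazurSequence F (max m n + 1) := mem_mazurSequence_succ.mpr
    ⟨x, .inl (hmono (le_max_left m n) hx), y, .inl (hmono (le_max_right m n) hy), le_rfl⟩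
  exact hmono (by omega : max m n + 1 ≤ m + n) hmax

theorem mazurSequence_subset_ideal {I : Order.Ideal L} (hF : ∀ n, F n ⊆ I) (n : ℕ) :
    mazurSequence F n ⊆ I := by
  induction n with
  | zero => exact singleton_subset_iff.mpr I.bot_mem
  | succ n ih =>
    intro x hx
    obtain ⟨a, ha, b, hb, hxab⟩ := mem_mazurSequence_succ.mp hx
    have hsub : mazurSequence F n ∪ F n ⊆ I := union_subset ih (hF n)
    exact I.lower hxab (I.sup_mem (hsub ha) (hsub hb))

theorem iUnion_mazurSequence {I : Order.Ideal L} (hI : (I : Set L) = ⋃ n, F n) :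
    ⋃ n, mazurSequence F n = I := by
  refine (iUnion_subset (mazurSequence_subset_ideal fun n => ?_)).antisymm ?_
  · exact hI ▸ subset_iUnion F n
  · exact hI ▸ iUnion_subset fun n =>
      (subset_union_right.trans union_subset_mazurSequence_succ).trans (subset_iUnion _ (n + 1))

theorem isClosed_mazurSequence [TopologicalSpace L] [CompactSpace L] [OrderClosedTopology L]
    [ContinuousSup L] (hF : ∀ n, IsClosed (F n)) (n : ℕ) : IsClosed (mazurSequence F n) := by
  induction n with
  | zero => exact isClosed_singleton
  | succ n ih =>
    have hcompact : IsCompact (mazurSequence F n ∪ F n) := (ih.union (hF n)).isCompact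
    exact isClosed_lowerClosure_of_isCompact (isCompact_sups hcompact hcompact)

theorem fSigma_iff_finOfSubmeasure_general [TopologicalSpace L] [CompactSpace L]
    [OrderClosedTopology L] [ContinuousSup L] (I : Order.Ideal L) :
    (∃ F : ℕ → Set L, (∀ n, IsClosed (F n)) ∧ (I : Set L) = ⋃ n, F n) ↔
      ∃ φ : L → ℝ≥0∞, IsLatticeLSCSubmeasure φ ∧ (I : Set L) = {x | φ x < ⊤} := by
  constructor
  · rintro ⟨F, hclosed, hI⟩
    refine ⟨fun x => (entryIndex (mazurSequence F) x : ℝ≥0∞), ?_, ?_⟩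
    · exact isLatticeLSCSubmeasure_entryIndex (monotone_mazurSequence F)
        (mem_mazurSequence_zero.mpr rfl) (isLowerSet_mazurSequence F) sup_mem_mazurSequence_add
        (isClosed_mazurSequence hclosed)
    · simp only [ENat.toENNReal_lt_top, entryIndex_lt_top_iff, iUnion_mazurSequence hI]
      rfl
  · rintro ⟨φ, hφ, hI⟩
    exact ⟨fun n => φ ⁻¹' Iic n, fun n => hφ.lowerSemicontinuous.isClosed_preimage n,
      hI.trans (setOf_lt_top_eq_iUnion_preimage_Iic φ)⟩

end Semilattice

section CantorSpace

instance orderClosedTopologyBool : OrderClosedTopology Bool :=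
  ⟨isClosed_discrete _⟩

instance continuousSupPi {ι : Type*} {L : ι → Type*} [∀ i, Max (L i)]
    [∀ i, TopologicalSpace (L i)] [∀ i, ContinuousSup (L i)] : ContinuousSup (∀ i, L i) :=
  ⟨continuous_pi fun i => ((continuous_apply i).comp continuous_fst).sup
    ((continuous_apply i).comp continuous_snd)⟩

theorem restrB_le (x : ℕ → Bool) (n : ℕ) : restrB x n ≤ x :=
  fun k => Bool.and_le_left (x k) _

theorem tendsto_restrB (x : ℕ → Bool) : Tendsto (restrB x) atTop (𝓝 x) := by
  refine tendsto_pi_nhds.mpr fun k => tendsto_const_nhds.congr' ?_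
  filter_upwards [eventually_gt_atTop k] with n hn
  simp [restrB, hn]

theorem continuous_comp_restrB {Y : Type*} [TopologicalSpace Y] (φ : (ℕ → Bool) → Y) (n : ℕ) :
    Continuous fun x => φ (restrB x n) := by
  let extend (z : Fin n → Bool) (k : ℕ) : Bool := if hk : k < n then z ⟨k, hk⟩ else false
  have hextend (x : ℕ → Bool) : restrB x n = extend fun i => x i := by
    ext k
    by_cases hk : k < n <;> simp [restrB, extend, hk]
  simp only [hextend]
  exact (continuous_of_discreteTopology (f := φ ∘ extend)).comp
    (by fun_prop : Continuous fun (x : ℕ → Bool) (i : Fin n) => x i)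

theorem lowerSemicontinuous_iff_tendsto_restrB {Y : Type*} [CompleteLinearOrder Y]
    [TopologicalSpace Y] [OrderTopology Y] {φ : (ℕ → Bool) → Y} (hφ : Monotone φ) :
    LowerSemicontinuous φ ↔ ∀ x, Tendsto (fun n => φ (restrB x n)) atTop (𝓝 (φ x)) := by
  have hle (x : ℕ → Bool) (n : ℕ) : φ (restrB x n) ≤ φ x := hφ (restrB_le x n)
  refine ⟨fun h x => tendsto_of_lowerSemicontinuousAt_of_le (h x) (tendsto_restrB x) (hle x),
    fun h => ?_⟩
  have hsup : φ = fun x => ⨆ n, φ (restrB x n) := funext fun x =>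
    (le_of_tendsto' (h x) (le_iSup fun n => φ (restrB x n))).antisymm (iSup_le (hle x))
  rw [hsup]
  exact lowerSemicontinuous_iSup fun n => (continuous_comp_restrB φ n).lowerSemicontinuous

theorem isLSCSubmeasure_iff {φ : (ℕ → Bool) → ℝ≥0∞} :
    IsLSCSubmeasure φ ↔ IsLatticeLSCSubmeasure φ := by
  constructor
  · rintro ⟨hbot, hmono, hsup, hlim⟩
    exact ⟨hbot, hmono, hsup, (lowerSemicontinuous_iff_tendsto_restrB hmono).mpr hlim⟩
  · rintro ⟨hbot, hmono, hsup, hlsc⟩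
    exact ⟨hbot, hmono, hsup, (lowerSemicontinuous_iff_tendsto_restrB hmono).mp hlsc⟩

/-- A nonempty `IsIdealB` as an `Order.Ideal` of the lattice `α → Bool`, to which
`fSigma_iff_finOfSubmeasure_general` applies. -/
def IsIdealB.toIdeal {α : Type} {I : Set (α → Bool)} (hI : IsIdealB I)
    (h0 : (fun _ => false) ∈ I) : Order.Ideal (α → Bool) where
  carrier := I
  lower' x y hyx hx := hI.1 x hx y hyx
  nonempty' := ⟨_, h0⟩
  directed' x hx y hy := ⟨x ⊔ y, hI.2 x hx y hy, le_sup_left, le_sup_right⟩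

end CantorSpace

/-- Mazur's theorem: an ideal `I` on `ℕ` is `F_σ` iff `I = Fin(φ)` for some
lower-semicontinuous submeasure `φ`. -/
theorem fSigma_iff_finOfSubmeasure (I : Set (ℕ → Bool)) (hI : IsIdealB I)
    (h0 : (fun _ => false) ∈ I) :
    IsFsigmaB I ↔ ∃ φ : (ℕ → Bool) → ENNReal, IsLSCSubmeasure φ ∧ I = {x | φ x < ⊤} := by
  simp only [isLSCSubmeasure_iff]
  exact fSigma_iff_finOfSubmeasure_general (hI.toIdeal h0)
end

section
/- For every F_σ ideal I on ℕ there exists a compact set K ⊆ 2^ℕ such that I = I_K and moreover for every infinite A ∈ I there is x ∈ K whose symmetric difference with A is finite. -/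
/-- `⟨K⟩ⁿ`: unions of `n+1` elements of `K`. -/
def angleB (K : Set (ℕ → Bool)) (n : ℕ) : Set (ℕ → Bool) :=
  {x | ∃ f : Fin (n + 1) → (ℕ → Bool), (∀ i, f i ∈ K) ∧ ∀ m, x m = true ↔ ∃ i, f i m = true}

/-- `↓M`: downward closure of `M`. -/
def downB (M : Set (ℕ → Bool)) : Set (ℕ → Bool) := {x | ∃ y ∈ M, subB x y}

/-- `I_K = ⋃ₙ ↓⟨K⟩ⁿ`. -/
def IdealOfCode (K : Set (ℕ → Bool)) : Set (ℕ → Bool) := ⋃ n, downB (angleB K n)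

/-!
Write a nonempty `I` as `⋃ n, F n` with `F n` closed, and let `K` consist of `∅`, the tails
`x ∩ [n, ∞)` of the members `x` of `F n`, and the singletons `{n}` that belong to `I`. The sets with
index `n` lie in `[n, ∞)` and hence converge to `∅`, which makes `K` compact. A member of `F n`
differs from its tail by finitely many points, each of which contributes a singleton of `K`.
-/

open Filter Set Topology

section Lattice

variable {α : Type}

theorem subB_iff_le {x y : α → Bool} : subB x y ↔ x ≤ y :=
  forall_congr' fun _ => Bool.le_iff_imp.symm

theorem IsIdealB.isLowerSet {I : Set (α → Bool)} (hI : IsIdealB I) : IsLowerSet I :=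
  fun x y hyx hx => hI.1 x hx y (subB_iff_le.2 hyx)

theorem IsIdealB.supClosed {I : Set (α → Bool)} (hI : IsIdealB I) : SupClosed I :=
  hI.2

theorem finset_sup_apply_eq_true {ι α : Type*} {s : Finset ι} {f : ι → α → Bool} {a : α} :
    s.sup f a = true ↔ ∃ i ∈ s, f i a = true := by
  rw [Finset.sup_apply]
  exact top_le_iff.symm.trans ((Finset.le_sup_iff bot_lt_top).trans
    (exists_congr fun _ => and_congr_right' top_le_iff))

end Lattice

section IdealOfCode

variable {K : Set (ℕ → Bool)}

theorem mem_angleB_iff {n : ℕ} {x : ℕ → Bool} :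
    x ∈ angleB K n ↔ ∃ f : Fin (n + 1) → ℕ → Bool, (∀ i, f i ∈ K) ∧ x = Finset.univ.sup f := by
  refine exists_congr fun f => and_congr_right fun _ => ?_
  refine Iff.trans (forall_congr' fun m => ?_) funext_iff.symm
  have hsup : Finset.univ.sup f m = true ↔ ∃ i, f i m = true := by
    simp only [finset_sup_apply_eq_true, Finset.mem_univ, true_and]
  rw [← hsup, ← Bool.eq_iff_iff]

theorem angleB_subset_idealOfCode (n : ℕ) : angleB K n ⊆ IdealOfCode K :=
  fun x hx => mem_iUnion.2 ⟨n, x, hx, subB_iff_le.2 le_rfl⟩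

theorem idealOfCode_subset {I : Set (ℕ → Bool)} (hI : IsIdealB I) (hK : K ⊆ I) :
    IdealOfCode K ⊆ I := by
  refine iUnion_subset fun n => ?_
  rintro x ⟨y, hy, hxy⟩
  obtain ⟨f, hf, rfl⟩ := mem_angleB_iff.1 hy
  exact hI.isLowerSet (subB_iff_le.1 hxy)
    (hI.supClosed.finsetSup_mem Finset.univ_nonempty fun i _ => hK (hf i))

end IdealOfCode

section Restrict

variable {α : Type*}

/-- The intersection `s ∩ x`, for a genuine set `s` and a subset `x` of `α` coded as a
characteristic function. -/
def restrictB (s : Set α) [DecidablePred (· ∈ s)] (x : α → Bool) : α → Bool :=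
  fun a => decide (a ∈ s) && x a

variable (s : Set α) [DecidablePred (· ∈ s)]

theorem restrictB_le (x : α → Bool) : restrictB s x ≤ x :=
  fun _ => inf_le_right

theorem restrictB_apply_of_notMem {a : α} (ha : a ∉ s) (x : α → Bool) :
    restrictB s x a = false := by
  simp [restrictB, ha]

theorem setOf_ne_restrictB_subset (x : α → Bool) : {a | x a ≠ restrictB s x a} ⊆ sᶜ := by
  intro a hne ha
  simp [restrictB, ha] at hne

theorem continuous_restrictB : Continuous (restrictB s) :=
  continuous_pi fun a => continuous_of_discreteTopology.comp (continuous_apply a)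

theorem finite_range_restrictB (hs : s.Finite) : (range (restrictB s)).Finite := by
  have := hs.to_subtype
  refine (finite_range fun (y : s → Bool) a => if h : a ∈ s then y ⟨a, h⟩ else false).subset ?_
  rintro _ ⟨x, rfl⟩
  refine ⟨fun a => x a, funext fun a => ?_⟩
  by_cases ha : a ∈ s <;> simp [restrictB, ha]

theorem restrictB_Ici_sup_singletons (n : ℕ) (x : ℕ → Bool) :
    (restrictB (Ici n) x ⊔ Finset.univ.sup fun i : Fin n => restrictB {(i : ℕ)} x) = x := by
  funext m
  rw [Bool.eq_iff_iff, Pi.sup_apply, Bool.max_eq_or, Bool.or_eq_true, finset_sup_apply_eq_true]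
  rcases le_or_gt n m with hnm | hmn
  · simp [restrictB, hnm]
  · have hm : ∃ i : Fin n, m = i := ⟨⟨m, hmn⟩, rfl⟩
    simp [restrictB, hmn.not_ge, hm]

end Restrict

section Topology

theorem isCompact_insert_iUnion_of_tendsto_smallSets {ι X : Type*} [TopologicalSpace X]
    {s : ι → Set X} {a : X} (hs : ∀ i, IsCompact (s i))
    (ha : Tendsto s cofinite (𝓝 a).smallSets) : IsCompact (insert a (⋃ i, s i)) := by
  intro l hl hle
  by_cases hal : ClusterPt a l
  · exact ⟨a, mem_insert .., hal⟩
  obtain ⟨u, hu, hul⟩ : ∃ u ∈ 𝓝 a, uᶜ ∈ l := by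
    rw [clusterPt_iff_not_disjoint, not_not] at hal
    simpa only [id] using (𝓝 a).basis_sets.disjoint_iff_left.1 hal
  have hfin : {i | ¬ s i ⊆ u}.Finite := tendsto_smallSets_iff.1 ha u hu
  have hmem : (⋃ i ∈ {i | ¬ s i ⊆ u}, s i) ∈ l := by
    filter_upwards [hul, le_principal_iff.1 hle] with x hxu hx
    rcases hx with rfl | hx
    · exact absurd (mem_of_mem_nhds hu) hxu
    · obtain ⟨i, hi⟩ := mem_iUnion.1 hx
      exact mem_biUnion (fun hsub => hxu (hsub hi)) hi
  obtain ⟨x, hx, hxl⟩ := hfin.isCompact_biUnion (fun i _ => hs i) (le_principal_iff.2 hmem)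
  exact ⟨x, Or.inr (iUnion₂_subset_iUnion _ _ hx), hxl⟩

theorem tendsto_smallSets_nhds_pi_of_eventually_eq {ι α : Type*} {X : α → Type*}
    [∀ a, TopologicalSpace (X a)] {l : Filter ι} {s : ι → Set (∀ a, X a)} {y : ∀ a, X a}
    (hs : ∀ a, ∀ᶠ i in l, ∀ x ∈ s i, x a = y a) : Tendsto s l (𝓝 y).smallSets := by
  simp only [nhds_pi, Filter.pi, smallSets_iInf, smallSets_comap_eq_comap_image, tendsto_iInf,
    tendsto_comap_iff]
  refine fun a => tendsto_smallSets_iff.2 fun u hu => (hs a).mono fun i hi => ?_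
  rintro _ ⟨x, hx, rfl⟩
  simpa only [Function.eval, hi x hx] using mem_of_mem_nhds hu

end Topology

section TailCode

variable {F : ℕ → Set (ℕ → Bool)}

/-- The `n`-th layer of `tailCode F`: the tails `x ∩ [n, ∞)` for `x ∈ F n`, together with the
traces on `{n}` of all members of `⋃ k, F k`. -/
def tailLayer (F : ℕ → Set (ℕ → Bool)) (n : ℕ) : Set (ℕ → Bool) :=
  restrictB (Ici n) '' F n ∪ restrictB {n} '' ⋃ k, F k

/-- The compact code of a nonempty ideal `⋃ n, F n` with closed `F n`; the element `⊥` is the empty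
set, to which the layers converge. -/
def tailCode (F : ℕ → Set (ℕ → Bool)) : Set (ℕ → Bool) :=
  insert ⊥ (⋃ n, tailLayer F n)

theorem restrictB_Ici_mem_tailCode {n : ℕ} {x : ℕ → Bool} (hx : x ∈ F n) :
    restrictB (Ici n) x ∈ tailCode F :=
  Or.inr (mem_iUnion.2 ⟨n, Or.inl (mem_image_of_mem _ hx)⟩)

theorem restrictB_singleton_mem_tailCode {x : ℕ → Bool} (hx : x ∈ ⋃ n, F n) (i : ℕ) :
    restrictB {i} x ∈ tailCode F :=
  Or.inr (mem_iUnion.2 ⟨i, Or.inr (mem_image_of_mem _ hx)⟩)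

theorem isCompact_tailLayer {n : ℕ} (hF : IsClosed (F n)) : IsCompact (tailLayer F n) :=
  (hF.isCompact.image (continuous_restrictB _)).union
    ((finite_range_restrictB _ (finite_singleton n)).subset (image_subset_range _ _)).isCompact

theorem apply_eq_false_of_mem_tailLayer {n m : ℕ} (hmn : m < n) {y : ℕ → Bool}
    (hy : y ∈ tailLayer F n) : y m = false := by
  rcases hy with ⟨x, -, rfl⟩ | ⟨x, -, rfl⟩
  · exact restrictB_apply_of_notMem (Ici n) hmn.not_ge x
  · exact restrictB_apply_of_notMem {n} hmn.ne x

theorem isCompact_tailCode (hF : ∀ n, IsClosed (F n)) : IsCompact (tailCode F) := by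
  refine isCompact_insert_iUnion_of_tendsto_smallSets (fun n => isCompact_tailLayer (hF n)) ?_
  rw [Nat.cofinite_eq_atTop]
  refine tendsto_smallSets_nhds_pi_of_eventually_eq fun m => ?_
  filter_upwards [eventually_gt_atTop m] with n hmn y hy
  exact apply_eq_false_of_mem_tailLayer hmn hy

theorem tailCode_subset_iUnion (hF : IsLowerSet (⋃ n, F n)) (hne : (⋃ n, F n).Nonempty) :
    tailCode F ⊆ ⋃ n, F n := by
  refine insert_subset (hF.bot_mem.2 hne) (iUnion_subset fun n => ?_)
  rintro _ (⟨x, hx, rfl⟩ | ⟨x, hx, rfl⟩)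
  · exact hF (restrictB_le _ x) (mem_iUnion_of_mem n hx)
  · exact hF (restrictB_le _ x) hx

theorem subset_angleB_tailCode (n : ℕ) : F n ⊆ angleB (tailCode F) n := by
  intro x hx
  refine mem_angleB_iff.2 ⟨Fin.cons (restrictB (Ici n) x) fun i : Fin n => restrictB {(i : ℕ)} x,
    Fin.cases (restrictB_Ici_mem_tailCode hx) fun i =>
      restrictB_singleton_mem_tailCode (mem_iUnion_of_mem n hx) i, ?_⟩
  simpa [Fin.univ_succ, Finset.sup_map] using (restrictB_Ici_sup_singletons n x).symm

theorem iUnion_subset_idealOfCode_tailCode : ⋃ n, F n ⊆ IdealOfCode (tailCode F) :=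
  iUnion_subset fun n => (subset_angleB_tailCode n).trans (angleB_subset_idealOfCode n)

theorem exists_mem_tailCode_finite_ne {x : ℕ → Bool} (hx : x ∈ ⋃ n, F n) :
    ∃ y ∈ tailCode F, {m | x m ≠ y m}.Finite := by
  obtain ⟨n, hn⟩ := mem_iUnion.1 hx
  refine ⟨_, restrictB_Ici_mem_tailCode hn, Finite.subset ?_ (setOf_ne_restrictB_subset _ x)⟩
  rw [compl_Ici]
  exact finite_Iio n

end TailCode

/-- Every `F_σ` ideal `I` on `ℕ` is of the form `I_K` for some compact `K ⊆ 2^ℕ`, which can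
moreover be chosen so that every infinite `A ∈ I` is almost equal to some element of `K`. -/
theorem exists_compact_code (I : Set (ℕ → Bool)) (hI : IsIdealB I) (hF : IsFsigmaB I) :
    ∃ K : Set (ℕ → Bool), IsCompact K ∧ I = IdealOfCode K ∧
      ∀ x ∈ I, InfiniteB x → ∃ y ∈ K, {n | x n ≠ y n}.Finite := by
  obtain ⟨F, hF, rfl⟩ := hF
  rcases (⋃ n, F n).eq_empty_or_nonempty with hempty | hne
  · rw [hempty] at hI ⊢
    exact ⟨∅, isCompact_empty, (empty_subset _).antisymm (idealOfCode_subset hI Subset.rfl),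
      by simp⟩
  · refine ⟨tailCode F, isCompact_tailCode hF, Subset.antisymm ?_ ?_, fun _ hx _ => ?_⟩
    · exact iUnion_subset_idealOfCode_tailCode
    · exact idealOfCode_subset hI (tailCode_subset_iUnion hI.isLowerSet hne)
    · exact exists_mem_tailCode_finite_ne hx
end

section
/- For every n ∈ ℕ, every coloring d : [ℕ]ⁿ → 2, and every m ≥ n, there is a coloring d̄ : [ℕ]^m → 2 such that an infinite set A ⊆ ℕ is monochromatic for d if and only if A is monochromatic for d̄. -/
/-- `A` is monochromatic for a coloring `c` of the `n`-element subsets of `ℕ`: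
`c` takes at most one value on `[A]ⁿ`. -/
def MonoB {β : Type} (n : ℕ) (A : Set ℕ) (c : Finset ℕ → β) : Prop :=
  ∀ s t : Finset ℕ, s.card = n → t.card = n → ↑s ⊆ A → ↑t ⊆ A → c s = c t

/-!
Color a set of size `n + 1` by the color of the set left after its maximum is erased. Erasing the
maximum maps `[A]ⁿ⁺¹` into `[A]ⁿ`, and it does so surjectively when `A` is unbounded, since then
every finite subset of `A` can be extended by a larger element of `A`. Hence both colorings take the
same values on `A`.
-/

section EraseMax

variable {α : Type*} [LinearOrder α]

/-- The finite set `s` with its maximum removed. Filtering, rather than erasing the maximum, avoids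
a proof that `s` is nonempty and gives `eraseMax ∅ = ∅`. -/
def eraseMax (s : Finset α) : Finset α :=
  {x ∈ s | ∃ y ∈ s, x < y}

theorem eraseMax_subset (s : Finset α) : eraseMax s ⊆ s :=
  Finset.filter_subset _ _

theorem eraseMax_insert_of_forall_lt {s : Finset α} {a : α} (ha : ∀ x ∈ s, x < a) :
    eraseMax (insert a s) = s := by
  ext x
  simp only [eraseMax, Finset.mem_filter, Finset.mem_insert]
  grind

theorem card_eraseMax (s : Finset α) : (eraseMax s).card = s.card - 1 := by
  induction s using Finset.induction_on_max with
  | empty => rfl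
  | insert a s ha _ =>
    have ha_notMem : a ∉ s := fun h => (ha a h).false
    rw [eraseMax_insert_of_forall_lt ha, Finset.card_insert_of_notMem ha_notMem,
      Nat.add_sub_cancel]

theorem exists_eraseMax_eq_of_not_bddAbove [Nonempty α] {A : Set α} (hA : ¬BddAbove A)
    {s : Finset α} (hs : ↑s ⊆ A) :
    ∃ u : Finset α, u.card = s.card + 1 ∧ ↑u ⊆ A ∧ eraseMax u = s := by
  obtain ⟨b, hb⟩ := s.bddAbove
  obtain ⟨a, haA, hba⟩ := not_bddAbove_iff.mp hA b
  have ha : ∀ x ∈ s, x < a := fun x hx => (hb hx).trans_lt hba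
  refine ⟨insert a s, Finset.card_insert_of_notMem fun h => (ha a h).false, ?_,
    eraseMax_insert_of_forall_lt ha⟩
  rw [Finset.coe_insert]
  exact Set.insert_subset haA hs

end EraseMax

section Coloring

variable {β : Type} {n : ℕ} {A : Set ℕ} {d : Finset ℕ → β}

theorem MonoB.comp_eraseMax (h : MonoB n A d) : MonoB (n + 1) A (d ∘ eraseMax) := by
  have card_eq {s : Finset ℕ} (hs : s.card = n + 1) : (eraseMax s).card = n := by
    rw [card_eraseMax, hs, Nat.add_sub_cancel]
  have subset_A {s : Finset ℕ} (hs : ↑s ⊆ A) : ↑(eraseMax s) ⊆ A :=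
    (Finset.coe_subset.mpr (eraseMax_subset s)).trans hs
  exact fun s t hs ht hsA htA => h _ _ (card_eq hs) (card_eq ht) (subset_A hsA) (subset_A htA)

theorem MonoB.of_comp_eraseMax (hA : A.Infinite) (h : MonoB (n + 1) A (d ∘ eraseMax)) :
    MonoB n A d := by
  have hA' : ¬BddAbove A := fun hbdd => hA hbdd.finite
  rintro s t rfl ht hsA htA
  obtain ⟨u, hu, huA, rfl⟩ := exists_eraseMax_eq_of_not_bddAbove hA' hsA
  obtain ⟨v, hv, hvA, rfl⟩ := exists_eraseMax_eq_of_not_bddAbove hA' htA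
  exact h u v hu (hv.trans (congrArg (· + 1) ht)) huA hvA

theorem monoB_comp_eraseMax_iterate_iff (hA : A.Infinite) (k : ℕ) :
    MonoB (n + k) A (d ∘ eraseMax^[k]) ↔ MonoB n A d := by
  induction k with
  | zero => rfl
  | succ k ih =>
    rw [Function.iterate_succ, ← Function.comp_assoc, ← Nat.add_assoc]
    exact Iff.trans ⟨.of_comp_eraseMax hA, .comp_eraseMax⟩ ih

end Coloring

theorem coloring_arity_up_general {β : Type} (n m : ℕ) (hnm : n ≤ m) (d : Finset ℕ → β) :
    ∃ db : Finset ℕ → β,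
      ∀ A : Set ℕ, A.Infinite → (MonoB n A d ↔ MonoB m A db) := by
  obtain ⟨k, rfl⟩ := Nat.exists_eq_add_of_le hnm
  exact ⟨d ∘ eraseMax^[k], fun A hA => (monoB_comp_eraseMax_iterate_iff hA k).symm⟩

/-- For every two-valued coloring `d` of `[ℕ]ⁿ` and every `m ≥ n` there is a two-valued coloring
`d̄` of `[ℕ]^m` with the same infinite monochromatic sets. -/
theorem coloring_arity_up (n m : ℕ) (hnm : n ≤ m) (d : Finset ℕ → Bool) :
    ∃ db : Finset ℕ → Bool,
      ∀ A : Set ℕ, A.Infinite → (MonoB n A d ↔ MonoB m A db) :=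
  coloring_arity_up_general n m hnm d
end

section
/- Let f, g ∈ ℕ^ℕ with g(n) ≥ 1 for all n, and let {dₙ}ₙ be a sequence of colorings with dₙ : [ℕ]^{f(n)} → g(n). Then there is a sequence of colorings {cₙ}ₙ with cₙ : [ℕ]ⁿ → 2 such that an infinite set A ⊆ ℕ is simultaneously monochromatic for {dₙ} if and only if A is simultaneously monochromatic for {cₙ}. -/
/-!
Let `k ≥ 2m` and color a `k`-set `s` according to whether `s` is itself monochromatic for a given
finite coloring `d` of the `m`-sets. If an infinite set `A` is monochromatic for this `2`-coloring,
then by Ramsey's theorem the color of its `k`-sets is "yes"; since the union of two `m`-subsets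
of `A` extends to a `k`-subset of `A`, the set `A` is monochromatic for `d`. Choosing distinct
exponents `k` for the countably many colorings makes them into one sequence.
-/

theorem exists_injective_nat_ge {ι : Type*} [Countable ι] (f : ι → ℕ) :
    ∃ k : ι → ℕ, k.Injective ∧ ∀ i, f i ≤ k i := by
  obtain ⟨e, he⟩ := exists_injective_nat ι
  exact ⟨fun i ↦ Nat.pair (e i) (f i), fun i j hij ↦ he (Nat.pair_eq_pair.1 hij).1,
    fun i ↦ Nat.right_le_pair _ _⟩

theorem exists_finset_superset_card_eq {α : Type*} {A : Set α} (hA : A.Infinite) {s : Finset α}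
    (hsA : ↑s ⊆ A) {k : ℕ} (hk : s.card ≤ k) :
    ∃ t : Finset α, s ⊆ t ∧ ↑t ⊆ A ∧ t.card = k := by
  obtain ⟨u, huA, hu⟩ := (hA.sdiff s.finite_toSet).exists_subset_card_eq (k - s.card)
  have hsu : Disjoint s u :=
    Finset.disjoint_right.2 fun x hxu hxs ↦ (huA hxu).2 hxs
  refine ⟨s.disjUnion u hsu, ?_, ?_, ?_⟩
  · exact fun x hx ↦ Finset.mem_disjUnion.2 (Or.inl hx)
  · rw [Finset.coe_disjUnion]
    exact Set.union_subset hsA (huA.trans Set.sdiff_subset)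
  · rw [Finset.card_disjUnion, hu, Nat.add_sub_cancel' hk]

theorem exists_infinite_subset_forall_eq {α β : Type*} [Finite β] (χ : α → β) {A : Set α}
    (hA : A.Infinite) : ∃ B ⊆ A, B.Infinite ∧ ∃ b, ∀ a ∈ B, χ a = b := by
  have := hA.to_subtype
  obtain ⟨b, hb⟩ := Finite.exists_infinite_fiber fun a : A ↦ χ a
  refine ⟨(↑) '' ((fun a : A ↦ χ a) ⁻¹' {b}), Subtype.coe_image_subset A _,
    (Set.infinite_coe_iff.1 hb).image Subtype.val_injective.injOn, b, ?_⟩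
  rintro _ ⟨a, ha, rfl⟩
  exact ha

section Ramsey

theorem exists_infinite_diagonal_subset {P : ℕ → Set ℕ → Prop} (anti : ∀ a, Antitone (P a))
    (step : ∀ a S, S.Infinite → ∃ T ⊆ S, T.Infinite ∧ P a T) {A : Set ℕ} (hA : A.Infinite) :
    ∃ B ⊆ A, B.Infinite ∧ ∀ a ∈ B, P a (B ∩ Set.Ioi a) := by
  choose! T hTS hTinf hPT using step
  let next (S : Set ℕ) : Set ℕ := T (sInf S) S \ Set.Iic (sInf S)
  let S (i : ℕ) : Set ℕ := next^[i] A
  let a (i : ℕ) : ℕ := sInf (S i)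
  have S_succ (i : ℕ) : S (i + 1) = T (a i) (S i) \ Set.Iic (a i) :=
    Function.iterate_succ_apply' next i A
  have S_infinite (i : ℕ) : (S i).Infinite := by
    induction i with
    | zero => exact hA
    | succ i ih => exact S_succ i ▸ (hTinf _ _ ih).sdiff (Set.finite_Iic _)
  have S_antitone : Antitone S := antitone_nat_of_succ_le fun i ↦
    S_succ i ▸ Set.sdiff_subset.trans (hTS _ _ (S_infinite i))
  have a_mem (i : ℕ) : a i ∈ S i := Nat.sInf_mem (S_infinite i).nonempty
  have a_strictMono : StrictMono a := strictMono_nat_of_lt_succ fun i ↦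
    not_le.1 (S_succ i ▸ a_mem (i + 1)).2
  refine ⟨Set.range a, ?_, Set.infinite_range_of_injective a_strictMono.injective, ?_⟩
  · rintro _ ⟨i, rfl⟩
    exact S_antitone (Nat.zero_le i) (a_mem i)
  · rintro _ ⟨i, rfl⟩
    have tail_subset : Set.range a ∩ Set.Ioi (a i) ⊆ T (a i) (S i) := by
      rintro _ ⟨⟨j, rfl⟩, hij⟩
      have hSj : a j ∈ S (i + 1) := S_antitone (a_strictMono.lt_iff_lt.1 hij) (a_mem j)
      exact (S_succ i ▸ hSj).1
    exact anti _ tail_subset (hPT _ _ (S_infinite i))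

variable {β : Type} {n : ℕ} {A : Set ℕ}

theorem MonoB.anti {B : Set ℕ} {c : Finset ℕ → β} (h : MonoB n A c) (hBA : B ⊆ A) :
    MonoB n B c :=
  fun s t hs ht hsB htB ↦ h s t hs ht (hsB.trans hBA) (htB.trans hBA)

theorem MonoB.exists_eq [Nonempty β] {c : Finset ℕ → β} (h : MonoB n A c) :
    ∃ b, ∀ s : Finset ℕ, s.card = n → ↑s ⊆ A → c s = b := by
  by_cases hn : ∃ t : Finset ℕ, t.card = n ∧ ↑t ⊆ A
  · obtain ⟨t, ht, htA⟩ := hn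
    exact ⟨c t, fun s hs hsA ↦ h s t hs ht hsA htA⟩
  · exact ⟨Classical.arbitrary β, fun s hs hsA ↦ (hn ⟨s, hs, hsA⟩).elim⟩

theorem monoB_succ_of_forall_min {c : Finset ℕ → β} {b : β}
    (h : ∀ a ∈ A, ∀ t : Finset ℕ, t.card = n → ↑t ⊆ A ∩ Set.Ioi a → c (insert a t) = b) :
    MonoB (n + 1) A c := by
  suffices c_eq : ∀ s : Finset ℕ, s.card = n + 1 → ↑s ⊆ A → c s = b from
    fun s t hs ht hsA htA ↦ (c_eq s hs hsA).trans (c_eq t ht htA).symm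
  intro s hs hsA
  have hne : s.Nonempty := Finset.card_pos.1 (by lia)
  have hmin := s.min'_mem hne
  rw [← Finset.insert_erase hmin]
  refine h _ (hsA hmin) _ (by rw [Finset.card_erase_of_mem hmin, hs, Nat.add_sub_cancel]) ?_
  exact fun x hx ↦ ⟨hsA (Finset.mem_of_mem_erase hx), s.min'_lt_of_mem_erase_min' hne hx⟩

theorem exists_infinite_subset_monoB [Finite β] (n : ℕ) (c : Finset ℕ → β) (hA : A.Infinite) :
    ∃ B ⊆ A, B.Infinite ∧ MonoB n B c := by
  induction n generalizing c A with
  | zero =>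
    refine ⟨A, subset_rfl, hA, fun s t hs ht _ _ ↦ ?_⟩
    rw [Finset.card_eq_zero.1 hs, Finset.card_eq_zero.1 ht]
  | succ n ih =>
    have : Nonempty β := ⟨c ∅⟩
    obtain ⟨B, hBA, hB, hmono⟩ :=
      exists_infinite_diagonal_subset (P := fun a S ↦ MonoB n S fun t ↦ c (insert a t))
        (fun a _ _ hST hT ↦ hT.anti hST) (fun a S hS ↦ ih (fun t ↦ c (insert a t)) hS) hA
    choose! χ hχ using fun a ha ↦ (hmono a ha).exists_eq
    obtain ⟨C, hCB, hC, b, hb⟩ := exists_infinite_subset_forall_eq χ hB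
    refine ⟨C, hCB.trans hBA, hC, monoB_succ_of_forall_min (b := b) fun a ha t ht htC ↦ ?_⟩
    rw [hχ a (hCB ha) t ht (htC.trans (Set.inter_subset_inter_left _ hCB)), hb a ha]

end Ramsey

section Transfer

variable {β : Type} {m k : ℕ} {A : Set ℕ}

theorem monoB_of_forall_finset (hmk : 2 * m ≤ k) (hA : A.Infinite) {d : Finset ℕ → β}
    (h : ∀ s : Finset ℕ, s.card = k → ↑s ⊆ A → MonoB m ↑s d) : MonoB m A d := by
  intro x y hx hy hxA hyA
  have hcard : (x ∪ y).card ≤ k := (Finset.card_union_le x y).trans (by lia)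
  obtain ⟨s, hxys, hsA, hs⟩ := exists_finset_superset_card_eq hA
    (Finset.coe_union x y ▸ Set.union_subset hxA hyA) hcard
  exact h s hs hsA x y hx hy (Finset.coe_subset.2 (Finset.union_subset_left hxys))
    (Finset.coe_subset.2 (Finset.union_subset_right hxys))

theorem monoB_monoB_iff [Finite β] (hmk : 2 * m ≤ k) (hA : A.Infinite) (d : Finset ℕ → β) :
    MonoB k A (fun s ↦ MonoB m ↑s d) ↔ MonoB m A d := by
  refine ⟨fun h ↦ monoB_of_forall_finset hmk hA fun s hs hsA ↦ ?_,
    fun h s t _ _ hsA htA ↦ propext (iff_of_true (h.anti hsA) (h.anti htA))⟩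
  obtain ⟨B, hBA, hB, hmono⟩ := exists_infinite_subset_monoB m d hA
  obtain ⟨t, htB, ht⟩ := hB.exists_subset_card_eq k
  exact (h s t hs ht hsA (htB.trans hBA)).mpr (hmono.anti htB)

theorem monoB_comp_iff {γ : Type} {e : β → γ} (he : e.Injective) {c : Finset ℕ → β} :
    MonoB m A (fun s ↦ e (c s)) ↔ MonoB m A c := by
  simp only [MonoB, he.eq_iff]

theorem forall_monoB_extend_iff {ι : Type*} {k : ι → ℕ} (hk : k.Injective)
    (c : ι → Finset ℕ → β) (b : β) :
    (∀ n, MonoB n A (Function.extend k c (fun _ _ ↦ b) n)) ↔ ∀ i, MonoB (k i) A (c i) := by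
  refine ⟨fun h i ↦ hk.extend_apply c _ i ▸ h (k i), fun h n ↦ ?_⟩
  by_cases hn : ∃ i, k i = n
  · obtain ⟨i, rfl⟩ := hn
    exact (hk.extend_apply c _ i).symm ▸ h i
  · rw [Function.extend_apply' _ _ _ hn]
    exact fun _ _ _ _ _ _ ↦ rfl

end Transfer

theorem colorings_normal_form_general {ι : Type*} [Countable ι] {β : ι → Type}
    [∀ i, Finite (β i)] (f : ι → ℕ) (d : (i : ι) → Finset ℕ → β i) :
    ∃ c : ℕ → Finset ℕ → Bool,
      ∀ A : Set ℕ, A.Infinite →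
        ((∀ i, MonoB (f i) A (d i)) ↔ ∀ n, MonoB n A (c n)) := by
  obtain ⟨k, hk_inj, hk_le⟩ := exists_injective_nat_ge fun i ↦ 2 * f i
  let c (i : ι) (s : Finset ℕ) : Bool := Equiv.propEquivBool (MonoB (f i) ↑s (d i))
  refine ⟨Function.extend k c fun _ _ ↦ true, fun A hA ↦ Iff.symm ?_⟩
  calc (∀ n, MonoB n A (Function.extend k c (fun _ _ ↦ true) n))
      ↔ ∀ i, MonoB (k i) A (c i) := forall_monoB_extend_iff hk_inj c true
    _ ↔ ∀ i, MonoB (k i) A (fun s ↦ MonoB (f i) ↑s (d i)) :=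
      forall_congr' fun _ ↦ monoB_comp_iff Equiv.propEquivBool.injective
    _ ↔ ∀ i, MonoB (f i) A (d i) := forall_congr' fun i ↦ monoB_monoB_iff (hk_le i) hA (d i)

/-- Any sequence of colorings `dₙ : [ℕ]^{f(n)} → g(n)` can be replaced by a sequence of colorings
`cₙ : [ℕ]ⁿ → 2` with the same infinite simultaneously monochromatic sets. -/
theorem colorings_normal_form (f g : ℕ → ℕ) (hg : ∀ n, 1 ≤ g n)
    (d : (n : ℕ) → Finset ℕ → Fin (g n)) :
    ∃ c : ℕ → Finset ℕ → Bool,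
      ∀ A : Set ℕ, A.Infinite →
        ((∀ n, MonoB (f n) A (d n)) ↔ ∀ n, MonoB n A (c n)) :=
  colorings_normal_form_general f d
end

section
/- There is no minimal tall Borel ideal in the Katětov order: there is no tall Borel ideal J on ℕ such that J ≤_K I for every tall Borel ideal I on ℕ. -/
/-!
Attach to every tree `T` of pairs of finite sequences an ideal `I_T` on the set of finite sequences,
uniformly `F_σ` in `T`, that contains all antichains and contains an infinite set of initial
segments of `y` iff `y` lies in the projection `p[T]`. As every infinite set of finite sequences has
an infinite antichain or an infinite chain, `I_T` is tall iff `p[T]` is everything.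

Given an analytic tall `J`, the set of pairs `(T, f)` such that `f` fails to reduce `J` to `I_T` is
analytic, so by the recursion theorem there is a tree `T` whose projection is exactly the set of
maps failing to reduce `J` to `I_T`. If `I_T` were not tall, some `f` would lie outside `p[T]`,
hence reduce `J` to `I_T` and make `I_T` tall after all. So `I_T` is tall, `p[T]` is everything, and
no map reduces `J` to `I_T`.
-/

open Filter MeasureTheory PiNat Set Topology

section Topology

lemma isCompact_Iic {Z : Type*} [TopologicalSpace Z] [Preorder Z] [OrderBot Z]
    [CompactIccSpace Z] (b : Z) : IsCompact (Iic b) := by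
  rw [← Icc_bot]
  exact isCompact_Icc

lemma isClosed_setOf_exists_mem_of_isCompact {X Z : Type*} [TopologicalSpace X]
    [TopologicalSpace Z] {C : Set Z} (hC : IsCompact C) {F : Set (X × Z)} (hF : IsClosed F) :
    IsClosed {x | ∃ z ∈ C, (x, z) ∈ F} := by
  have := isCompact_iff_compactSpace.1 hC
  have hF' : IsClosed {p : X × C | (p.1, (p.2 : Z)) ∈ F} := hF.preimage (by fun_prop)
  convert isClosedMap_fst_of_compactSpace _ hF' using 1
  ext x
  simp

lemma continuous_apply_of_isLocallyConstant {X ι β : Type*} [TopologicalSpace X]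
    [TopologicalSpace β] {F : X → ι → β} {g : X → ι} (hF : Continuous F)
    (hg : IsLocallyConstant g) : Continuous fun x => F x (g x) := by
  refine continuous_iff_continuousAt.2 fun x => ?_
  refine ((continuous_apply (g x)).comp hF).continuousAt.congr ?_
  filter_upwards [hg.eventually_eq x] with x' hx'
  simp [hx']

instance instPolishSpaceForall {ι β : Type*} [Countable ι] [TopologicalSpace β] [PolishSpace β] :
    PolishSpace (ι → β) where

lemma analyticSet_inter {X : Type*} [TopologicalSpace X] [T2Space X] {A B : Set X}
    (hA : AnalyticSet A) (hB : AnalyticSet B) : AnalyticSet (A ∩ B) := by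
  rw [inter_eq_iInter]
  exact .iInter (Bool.forall_bool.2 ⟨hB, hA⟩)

lemma exists_isClosed_image_fst_eq_of_analyticSet {X : Type*} [TopologicalSpace X] [T2Space X]
    {A : Set X} (hA : AnalyticSet A) :
    ∃ F : Set (X × (ℕ → ℕ)), IsClosed F ∧ Prod.fst '' F = A := by
  rw [AnalyticSet] at hA
  obtain rfl | ⟨g, hg, rfl⟩ := hA
  · exact ⟨∅, isClosed_empty, image_empty _⟩
  · refine ⟨{p | g p.2 = p.1}, isClosed_eq (by fun_prop) (by fun_prop), ?_⟩
    ext x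
    simp

end Topology

section Ideals

variable {α β γ : Type}

@[simp]
lemma suppB_boolIndicator (S : Set α) : suppB S.boolIndicator = S :=
  S.preimage_boolIndicator_true

lemma IsFsigmaB.measurableSet [Countable α] {I : Set (α → Bool)} (hI : IsFsigmaB I) :
    MeasurableSet I := by
  obtain ⟨F, hF, rfl⟩ := hI
  exact MeasurableSet.iUnion fun n => (hF n).measurableSet

lemma KatLE.trans {I : Set (α → Bool)} {J : Set (β → Bool)} {K : Set (γ → Bool)}
    (hIJ : KatLE I J) (hJK : KatLE J K) : KatLE I K := by
  obtain ⟨f, hf⟩ := hIJ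
  obtain ⟨g, hg⟩ := hJK
  exact ⟨f ∘ g, fun x hx => hg _ (hf x hx)⟩

lemma isTallB_iff_exists_infinite_inter {I : Set (α → Bool)}
    (hI : ∀ x ∈ I, ∀ y, subB y x → y ∈ I) :
    IsTallB I ↔ ∀ S : Set α, S.Infinite → ∃ x ∈ I, (S ∩ suppB x).Infinite := by
  constructor
  · intro h S hS
    obtain ⟨x, hx, hinf, hsub⟩ := h S.boolIndicator (by rwa [InfiniteB, suppB_boolIndicator])
    exact ⟨x, hx, hinf.mono fun a ha => ⟨(S.mem_iff_boolIndicator a).2 (hsub a ha), ha⟩⟩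
  · intro h x hx
    obtain ⟨y, hy, hinf⟩ := h (suppB x) hx
    refine ⟨(suppB x ∩ suppB y).boolIndicator, hI y hy _ fun a ha => ?_, ?_, fun a ha => ?_⟩
    · exact ((mem_iff_boolIndicator _ a).2 ha).2
    · rwa [InfiniteB, suppB_boolIndicator]
    · exact ((mem_iff_boolIndicator _ a).2 ha).1

lemma IsTallB.of_katLE {J : Set (α → Bool)} {I : Set (β → Bool)} (hJ : IsTallB J)
    (hfin : ContainsFinB J) (hI : ∀ x ∈ I, ∀ y, subB y x → y ∈ I) (h : KatLE J I) :
    IsTallB I := by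
  obtain ⟨f, hf⟩ := h
  refine (isTallB_iff_exists_infinite_inter hI).2 fun S hS => ?_
  by_cases himage : (f '' S).Finite
  · obtain ⟨a, -, hfiber⟩ : ∃ a ∈ f '' S, (S ∩ f ⁻¹' {a}).Infinite := by
      by_contra! hfibers
      exact hS (himage.of_finite_fibers f hfibers)
    refine ⟨_, hf ({a} : Set α).boolIndicator (hfin _ (by simp)), ?_⟩
    rwa [← suppB_boolIndicator {a}] at hfiber
  · obtain ⟨x, hx, hinf, hsub⟩ :=
      hJ (f '' S).boolIndicator (by rwa [InfiniteB, suppB_boolIndicator])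
    refine ⟨_, hf x hx, Infinite.of_image f (hinf.mono fun a ha => ?_)⟩
    obtain ⟨b, hb, rfl⟩ := (mem_iff_boolIndicator _ a).2 (hsub a ha)
    exact ⟨b, ⟨hb, ha⟩, rfl⟩

/-- The Rudin–Keisler image of a family of subsets of `α` under a map `α → β`; it carries ideals on
`List ℕ` over to `ℕ`. -/
def rkImageB (f : α → β) (I : Set (α → Bool)) : Set (β → Bool) := {x | x ∘ f ∈ I}

lemma isIdealB_rkImageB (f : α → β) {I : Set (α → Bool)} (hI : IsIdealB I) :
    IsIdealB (rkImageB f I) :=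
  ⟨fun x hx _ hyx => hI.1 (x ∘ f) hx _ fun a => hyx (f a), fun x hx _ hy => hI.2 (x ∘ f) hx _ hy⟩

lemma containsFinB_rkImageB {f : α → β} (hf : f.Injective) {I : Set (α → Bool)}
    (hI : ContainsFinB I) : ContainsFinB (rkImageB f I) :=
  fun _ hx => hI _ (hx.preimage hf.injOn)

lemma isFsigmaB_rkImageB (f : α → β) {I : Set (α → Bool)} (hI : IsFsigmaB I) :
    IsFsigmaB (rkImageB f I) := by
  obtain ⟨F, hF, rfl⟩ := hI
  refine ⟨fun n => (· ∘ f) ⁻¹' F n, fun n => (hF n).preimage (by fun_prop), ?_⟩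
  ext x
  simp [rkImageB]

lemma katLE_rkImageB_self (f : α → β) (I : Set (α → Bool)) : KatLE (rkImageB f I) I :=
  ⟨f, fun _ hx => hx⟩

lemma katLE_rkImageB_equiv (e : α ≃ β) (I : Set (α → Bool)) : KatLE I (rkImageB e I) := by
  refine ⟨e.symm, fun x hx => ?_⟩
  simpa [rkImageB, Function.comp_def] using hx

end Ideals

section IdealSpan

variable {α : Type}

/-- The ideal generated by a family `K`: all subsets of finite unions of members of `K`. -/
def idealSpanB (K : Set (α → Bool)) : Set (α → Bool) :=
  {x | ∃ n, ∃ b : Fin n → α → Bool, (∀ i, b i ∈ K) ∧ ∀ a, x a = true → ∃ i, b i a = true}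

lemma subset_idealSpanB (K : Set (α → Bool)) : K ⊆ idealSpanB K :=
  fun x hx => ⟨1, fun _ => x, fun _ => hx, fun _ ha => ⟨0, ha⟩⟩

lemma isIdealB_idealSpanB (K : Set (α → Bool)) : IsIdealB (idealSpanB K) := by
  refine ⟨?_, ?_⟩
  · rintro x ⟨n, b, hb, hx⟩ y hyx
    exact ⟨n, b, hb, fun a ha => hx a (hyx a ha)⟩
  · rintro x ⟨m, b, hb, hx⟩ y ⟨n, c, hc, hy⟩
    refine ⟨m + n, Fin.append b c, Fin.addCases (by simpa using hb) (by simpa using hc), ?_⟩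
    intro a ha
    rcases (Bool.or_eq_true _ _).mp ha with ha | ha
    · obtain ⟨i, hi⟩ := hx a ha
      exact ⟨Fin.castAdd n i, by simpa using hi⟩
    · obtain ⟨i, hi⟩ := hy a ha
      exact ⟨Fin.natAdd m i, by simpa using hi⟩

lemma containsFinB_idealSpanB {K : Set (α → Bool)} (hK : ∀ a, ({a} : Set α).boolIndicator ∈ K) :
    ContainsFinB (idealSpanB K) := by
  intro x hx
  obtain ⟨n, f, -, hf⟩ := hx.fin_param
  refine ⟨n, fun i => ({f i} : Set α).boolIndicator, fun i => hK (f i), fun a ha => ?_⟩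
  obtain ⟨i, rfl⟩ := hf.ge ha
  exact ⟨i, (mem_iff_boolIndicator _ _).1 rfl⟩

lemma isTallB_idealSpanB_iff {K : Set (α → Bool)} :
    IsTallB (idealSpanB K) ↔ ∀ S : Set α, S.Infinite → ∃ x ∈ K, (S ∩ suppB x).Infinite := by
  rw [isTallB_iff_exists_infinite_inter (isIdealB_idealSpanB K).1]
  refine forall₂_congr fun S _ => ⟨?_, ?_⟩
  · rintro ⟨x, ⟨n, b, hb, hx⟩, hinf⟩
    obtain ⟨i, hi⟩ : ∃ i, (S ∩ suppB (b i)).Infinite := by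
      by_contra! hpieces
      refine hinf ((finite_iUnion hpieces).subset fun a ha => ?_)
      obtain ⟨i, hi⟩ := hx a ha.2
      exact mem_iUnion.2 ⟨i, ha.1, hi⟩
    exact ⟨b i, hb i, hi⟩
  · rintro ⟨x, hx, hinf⟩
    exact ⟨x, subset_idealSpanB K hx, hinf⟩

lemma exists_isClosed_iUnion_eq_setOf_mem_idealSpanB {P : Type*} [TopologicalSpace P]
    {K : P → Set (α → Bool)} (hK : IsClosed {p : P × (α → Bool) | p.2 ∈ K p.1}) :
    ∃ F : ℕ → Set (P × (α → Bool)), (∀ n, IsClosed (F n)) ∧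
      {p : P × (α → Bool) | p.2 ∈ idealSpanB (K p.1)} = ⋃ n, F n := by
  refine ⟨fun n => {p | ∃ b ∈ (univ : Set (Fin n → α → Bool)),
    (p, b) ∈ {q : (P × (α → Bool)) × (Fin n → α → Bool) |
      (∀ i, q.2 i ∈ K q.1.1) ∧ ∀ a, q.1.2 a = true → ∃ i, q.2 i a = true}}, fun n => ?_, ?_⟩
  · refine isClosed_setOf_exists_mem_of_isCompact isCompact_univ (.and ?_ ?_)
    · simp only [ofPred_forall]
      refine isClosed_iInter fun i => hK.preimage
        (f := fun q : (P × (α → Bool)) × (Fin n → α → Bool) => (q.1.1, q.2 i)) (by fun_prop)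
    · simp only [ofPred_forall]
      refine isClosed_iInter fun a => isClosed_imp ?_ ?_
      · exact (isOpen_discrete {true}).preimage
          (f := fun q : (P × (α → Bool)) × (Fin n → α → Bool) => q.1.2 a) (by fun_prop)
      · simp only [ofPred_exists]
        refine isClosed_iUnion_of_finite fun i => (isClosed_discrete {true}).preimage
          (f := fun q : (P × (α → Bool)) × (Fin n → α → Bool) => q.2 i a) (by fun_prop)
  · ext p
    simp [idealSpanB]

end IdealSpan

section FiniteRestrictions

lemma exists_infinite_subset_isChain_or_isAntichain {α : Type*} (r : α → α → Prop) [IsTrans α r]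
    {S : Set α} (hS : S.Infinite) :
    ∃ C ⊆ S, C.Infinite ∧ (IsChain r C ∨ IsAntichain r C) := by
  let f : ℕ → α := fun n => hS.natEmbedding S n
  have hf : f.Injective := Subtype.val_injective.comp (hS.natEmbedding S).injective
  have hfS : ∀ n, f n ∈ S := fun n => (hS.natEmbedding S n).2
  suffices h : ∃ g : ℕ ↪o ℕ, IsChain r (range (f ∘ g)) ∨ IsAntichain r (range (f ∘ g)) by
    obtain ⟨g, hg⟩ := h
    exact ⟨_, range_subset_iff.2 fun n => hfS (g n),
      infinite_range_of_injective (hf.comp g.injective), hg⟩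
  have pairwise_range : ∀ {p : α → α → Prop} (u : ℕ → α), (∀ m n, m < n → p (u m) (u n)) →
      (∀ m n, m < n → p (u n) (u m)) → (range u).Pairwise p := by
    rintro p u hlt hgt _ ⟨m, rfl⟩ _ ⟨n, rfl⟩ hne
    exact (lt_or_gt_of_ne (ne_of_apply_ne u hne)).elim (hlt m n) (hgt n m)
  obtain ⟨g, hg | hg⟩ := exists_increasing_or_nonincreasing_subseq r f
  · exact ⟨g, .inl <| pairwise_range (f ∘ g) (fun m n h => .inl (hg m n h))
      fun m n h => .inr (hg m n h)⟩
  obtain ⟨g', hg' | hg'⟩ := exists_increasing_or_nonincreasing_subseq (Function.swap r) (f ∘ g)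
  · exact ⟨g'.trans g, .inl <| pairwise_range (f ∘ g ∘ g') (fun m n h => .inr (hg' m n h))
      fun m n h => .inl (hg' m n h)⟩
  · exact ⟨g'.trans g, .inr <| pairwise_range (f ∘ g ∘ g')
      (fun m n h => hg (g' m) (g' n) (g'.strictMono h)) hg'⟩

variable {α : Type*}

lemma suffix_res_iff {y : ℕ → α} {n : ℕ} {s : List α} :
    s <:+ res y n ↔ ∃ m ≤ n, res y m = s := by
  induction n with
  | zero => simp [eq_comm]
  | succ n ih =>
    rw [res_succ, List.suffix_cons_iff, ih, ← res_succ]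
    simp only [Nat.le_succ_iff, or_and_right, exists_or, exists_eq_left]
    rw [or_comm, eq_comm]

lemma res_left_injective (y : ℕ → α) : (res y).Injective :=
  fun m n h => by simpa using congrArg List.length h

lemma exists_res_eq_of_isChain {C : Set (List α)} (hC : IsChain (· <:+ ·) C) (hinf : C.Infinite) :
    ∃ y : ℕ → α, ∀ s ∈ C, res y s.length = s := by
  have hlength : InjOn List.length C := fun s hs t ht h =>
    (hC.total hs ht).elim (·.eq_of_length h) fun hts => (hts.eq_of_length h.symm).symm
  have hlong : ∀ i, ∃ a l, l.length = i ∧ ∃ s ∈ C, a :: l <:+ s := by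
    intro i
    obtain ⟨_, ⟨s, hs, rfl⟩, hi⟩ := (hinf.image hlength).exists_gt i
    obtain ⟨a, l, hal⟩ := List.exists_cons_of_length_eq_add_one
      (l := s.drop (s.length - (i + 1))) (n := i) (by simp; omega)
    refine ⟨a, l, ?_, s, hs, hal ▸ List.drop_suffix _ _⟩
    have := congrArg List.length hal
    simp only [List.length_drop, List.length_cons] at this
    omega
  choose y l hl hy using hlong
  suffices h : ∀ r, (∃ s ∈ C, r <:+ s) → res y r.length = r from
    ⟨y, fun s hs => h s ⟨s, hs, List.suffix_rfl⟩⟩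
  intro r hr
  induction r with
  | nil => rfl
  | cons a r ih =>
    obtain ⟨s, hs, hrs⟩ := hr
    obtain ⟨s', hs', hls'⟩ := hy r.length
    obtain ⟨u, hru, hlu⟩ : ∃ u, a :: r <:+ u ∧ y r.length :: l r.length <:+ u :=
      (hC.total hs hs').elim (fun h => ⟨s', hrs.trans h, hls'⟩) fun h => ⟨s, hrs, hls'.trans h⟩
    have hhead : a :: r = y r.length :: l r.length :=
      (List.suffix_of_suffix_length_le hru hlu (by simp [hl])).eq_of_length (by simp [hl])
    rw [List.length_cons, res_succ, ih ⟨s, hs, (List.suffix_cons a r).trans hrs⟩,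
      ← (List.cons.inj hhead).1]

lemma isLocallyConstant_res [TopologicalSpace α] [DiscreteTopology α] (n : ℕ) :
    IsLocallyConstant fun x : ℕ → α => res x n := by
  induction n with
  | zero => exact IsLocallyConstant.const _
  | succ n ih =>
    exact ((IsLocallyConstant.iff_continuous _).2 (continuous_apply n)).comp₂ ih List.cons

lemma tendsto_of_res_eq [TopologicalSpace α] {u : ℕ → ℕ → α} {x : ℕ → α}
    (h : ∀ n, res (u n) n = res x n) : Tendsto u atTop (𝓝 x) := by
  refine tendsto_pi_nhds.2 fun i => tendsto_const_nhds.congr' ?_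
  filter_upwards [eventually_gt_atTop i] with n hn
  exact (res_eq_res.1 (h n) hn).symm

end FiniteRestrictions

section TreeProjection

variable {α : Type*}

/-- The projection `p[T]` of a tree `T` of pairs of finite sequences. Finite sequences are lists in
reverse order, as in `PiNat.res`, and `T` may be any set of pairs: only `T (res y n, res z n)` for
all `n` matters. -/
def treeProj (T : List α × List ℕ → Bool) : Set (ℕ → α) :=
  {y | ∃ z : ℕ → ℕ, ∀ n, T (res y n, res z n) = true}

/-- `z` witnesses that `s` looks like an initial segment of a point of the projection of `T`, up to
length `k` (exclusive). -/
def IsPartialWitness (T : List α × List ℕ → Bool) (k : ℕ) (s : List α) (z : ℕ → ℕ) : Prop :=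
  ∀ r, r <:+ s → r.length < k → T (r, res z r.length) = true

lemma isPartialWitness_res_iff {T : List α × List ℕ → Bool} {k n : ℕ} (hkn : k ≤ n) {y : ℕ → α}
    {z : ℕ → ℕ} :
    IsPartialWitness T k (res y n) z ↔ ∀ j < k, T (res y j, res z j) = true := by
  simp only [IsPartialWitness, suffix_res_iff]
  constructor
  · intro h j hj
    simpa using h (res y j) ⟨j, (hj.trans_le hkn).le, rfl⟩ (by simpa using hj)
  · rintro h _ ⟨j, -, rfl⟩ hj
    simpa using h j (by simpa using hj)

lemma isClosed_setOf_isPartialWitness (k : ℕ) (s : List α) :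
    IsClosed {p : (List α × List ℕ → Bool) × (ℕ → ℕ) | IsPartialWitness p.1 k s p.2} := by
  simp only [IsPartialWitness, ofPred_forall]
  refine isClosed_iInter fun r => isClosed_iInter fun _ => isClosed_iInter fun _ => ?_
  have hres : IsLocallyConstant fun p : (List α × List ℕ → Bool) × (ℕ → ℕ) =>
      (r, res p.2 r.length) :=
    ((isLocallyConstant_res r.length).comp_continuous continuous_snd).comp (Prod.mk r)
  exact isClosed_eq (continuous_apply_of_isLocallyConstant continuous_fst hres) continuous_const

lemma mem_treeProj_of_bounded {T : List α × List ℕ → Bool} {y : ℕ → α} (b : ℕ → ℕ)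
    (h : ∀ k, ∃ z ≤ b, IsPartialWitness T k (res y k) z) : y ∈ treeProj T := by
  let W : ℕ → Set (ℕ → ℕ) := fun k => Iic b ∩ {z | IsPartialWitness T k (res y k) z}
  have hclosed : ∀ k, IsClosed (W k) := fun k =>
    isClosed_Iic.inter <| (isClosed_setOf_isPartialWitness k (res y k)).preimage
      (f := Prod.mk T) (by fun_prop)
  have hanti : ∀ k, W (k + 1) ⊆ W k := by
    rintro k z ⟨hzb, hz⟩
    refine ⟨hzb, (isPartialWitness_res_iff le_rfl).2 fun j hj => ?_⟩
    exact (isPartialWitness_res_iff le_rfl).1 hz j (hj.trans k.lt_succ_self)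
  obtain ⟨z, hz⟩ := IsCompact.nonempty_iInter_of_sequence_nonempty_isCompact_isClosed W hanti h
    ((isCompact_Iic b).of_isClosed_subset (hclosed 0) inter_subset_left) hclosed
  exact ⟨z, fun n =>
    (isPartialWitness_res_iff le_rfl).1 (mem_iInter.1 hz (n + 1)).2 n n.lt_succ_self⟩

end TreeProjection

section Recursion

variable {α : Type*} [Encodable α]

/-- The section `{(s, t) | (c↾|s|, s, t) ∈ c}` of a tree `c` of triples by `c` itself, where `c` is
coded as a real by enumerating the triples. -/
def selfSection (c : ℕ → Bool) : List α × List ℕ → Bool :=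
  fun p => c (Encodable.encode (res c p.1.length, p))

lemma continuous_selfSection : Continuous (selfSection (α := α)) :=
  continuous_pi fun p => continuous_apply_of_isLocallyConstant (F := fun c => c) continuous_id <|
    (isLocallyConstant_res p.1.length).comp fun u => Encodable.encode (u, p)

/-- The tree of finite restrictions of points of `F`, coded as a real. -/
noncomputable def treeCode (F : Set (((ℕ → Bool) × (ℕ → α)) × (ℕ → ℕ))) : ℕ → Bool :=
  boolIndicator {m | ∃ p ∈ F, ∃ n, Encodable.encode (res p.1.1 n, res p.1.2 n, res p.2 n) = m}

lemma treeCode_encode_res_iff {F : Set (((ℕ → Bool) × (ℕ → α)) × (ℕ → ℕ))} {x : ℕ → Bool}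
    {y : ℕ → α} {z : ℕ → ℕ} {n : ℕ} :
    treeCode F (Encodable.encode (res x n, res y n, res z n)) = true ↔
      ∃ p ∈ F, res p.1.1 n = res x n ∧ res p.1.2 n = res y n ∧ res p.2 n = res z n := by
  rw [treeCode, ← mem_iff_boolIndicator]
  simp only [mem_ofPred_eq, Encodable.encode_inj, Prod.mk.injEq]
  refine exists_congr fun p => and_congr_right fun _ => ⟨?_, fun h => ⟨n, h⟩⟩
  rintro ⟨m, hx, hy, hz⟩
  obtain rfl : m = n := by simpa using congrArg List.length hz
  exact ⟨hx, hy, hz⟩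

lemma mem_iff_forall_treeCode_of_isClosed [TopologicalSpace α]
    {F : Set (((ℕ → Bool) × (ℕ → α)) × (ℕ → ℕ))} (hF : IsClosed F) {x : ℕ → Bool} {y : ℕ → α}
    {z : ℕ → ℕ} :
    ((x, y), z) ∈ F ↔ ∀ n, treeCode F (Encodable.encode (res x n, res y n, res z n)) = true := by
  simp only [treeCode_encode_res_iff]
  refine ⟨fun h n => ⟨_, h, rfl, rfl, rfl⟩, fun h => ?_⟩
  choose p hpF hx hy hz using h
  refine hF.mem_of_tendsto (f := p) (b := atTop) ?_ (Eventually.of_forall hpF)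
  exact ((tendsto_of_res_eq hx).prodMk_nhds (tendsto_of_res_eq hy)).prodMk_nhds
    (tendsto_of_res_eq hz)

theorem exists_treeProj_eq_section_of_analyticSet [TopologicalSpace α] [DiscreteTopology α]
    {E : Set ((List α × List ℕ → Bool) × (ℕ → α))} (hE : AnalyticSet E) :
    ∃ T, treeProj T = {y | (T, y) ∈ E} := by
  have hE' : AnalyticSet {p : (ℕ → Bool) × (ℕ → α) | (selfSection p.1, p.2) ∈ E} :=
    hE.preimage ((continuous_selfSection.comp continuous_fst).prodMk continuous_snd)
  obtain ⟨F, hF, hFE⟩ := exists_isClosed_image_fst_eq_of_analyticSet hE'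
  refine ⟨selfSection (treeCode F), ext fun y => ?_⟩
  calc y ∈ treeProj (selfSection (treeCode F))
    _ ↔ ∃ z, ((treeCode F, y), z) ∈ F := by
      simp [treeProj, selfSection, mem_iff_forall_treeCode_of_isClosed hF]
    _ ↔ (treeCode F, y) ∈ Prod.fst '' F := by simp
    _ ↔ y ∈ {y | (selfSection (treeCode F), y) ∈ E} := by rw [hFE]; rfl

end Recursion

section TreeIdeal

variable {α : Type}

/-- The family generating the ideal of a tree `T`: sets of finite sequences in which the top of
every chain `t 0 ⊏ ⋯ ⊏ t k` has a partial witness `z` of length `k`, bounded by the lengths of the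
members of the chain. The bound makes the family closed; the values `z i` with `i ≥ k` are
irrelevant. -/
def chainFamily (T : List α × List ℕ → Bool) : Set (List α → Bool) :=
  {x | ∀ (k : ℕ) (t : ℕ → List α), (∀ i ≤ k, x (t i) = true) →
    (∀ i < k, t i <:+ t (i + 1) ∧ t i ≠ t (i + 1)) →
    ∃ z ≤ fun i => (t i).length, IsPartialWitness T k (t k) z}

/-- The ideal of a tree `T`, which is tall iff `T` projects onto everything. -/
def treeIdeal (T : List α × List ℕ → Bool) : Set (List α → Bool) := idealSpanB (chainFamily T)

lemma isClosed_setOf_mem_chainFamily :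
    IsClosed {p : (List α × List ℕ → Bool) × (List α → Bool) | p.2 ∈ chainFamily p.1} := by
  simp only [chainFamily, mem_ofPred_eq]
  simp only [ofPred_forall]
  refine isClosed_iInter fun k => isClosed_iInter fun t => isClosed_imp ?_ <|
    isClosed_imp isOpen_const ?_
  · have hopen : IsOpen (⋂ i ∈ Iic k,
        {p : (List α × List ℕ → Bool) × (List α → Bool) | p.2 (t i) = true}) :=
      (finite_Iic k).isOpen_biInter fun i _ => (isOpen_discrete {true}).preimage
        (f := fun p : (List α × List ℕ → Bool) × (List α → Bool) => p.2 (t i)) (by fun_prop)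
    simpa only [mem_Iic, ofPred_forall] using hopen
  · exact (isClosed_setOf_exists_mem_of_isCompact (isCompact_Iic _)
      (isClosed_setOf_isPartialWitness k (t k))).preimage continuous_fst

lemma boolIndicator_mem_chainFamily_of_isAntichain (T : List α × List ℕ → Bool)
    {C : Set (List α)} (hC : IsAntichain (· <:+ ·) C) : C.boolIndicator ∈ chainFamily T := by
  intro k t ht hchain
  simp only [← mem_iff_boolIndicator] at ht
  obtain rfl | hk := k.eq_zero_or_pos
  · exact ⟨0, fun _ => Nat.zero_le _, fun r _ hr => absurd hr (Nat.not_lt_zero _)⟩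
  · exact absurd (hchain 0 hk).1 (hC (ht 0 (by omega)) (ht 1 hk) (hchain 0 hk).2)

lemma isIdealB_treeIdeal (T : List α × List ℕ → Bool) : IsIdealB (treeIdeal T) :=
  isIdealB_idealSpanB _

lemma containsFinB_treeIdeal (T : List α × List ℕ → Bool) : ContainsFinB (treeIdeal T) :=
  containsFinB_idealSpanB fun _ =>
    boolIndicator_mem_chainFamily_of_isAntichain T (subsingleton_singleton.isAntichain _)

lemma exists_isClosed_iUnion_eq_setOf_mem_treeIdeal :
    ∃ F : ℕ → Set ((List α × List ℕ → Bool) × (List α → Bool)), (∀ n, IsClosed (F n)) ∧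
      {p : (List α × List ℕ → Bool) × (List α → Bool) | p.2 ∈ treeIdeal p.1} = ⋃ n, F n :=
  exists_isClosed_iUnion_eq_setOf_mem_idealSpanB isClosed_setOf_mem_chainFamily

lemma isFsigmaB_treeIdeal (T : List α × List ℕ → Bool) : IsFsigmaB (treeIdeal T) := by
  obtain ⟨F, hF, hUnion⟩ := exists_isClosed_iUnion_eq_setOf_mem_treeIdeal (α := α)
  refine ⟨fun n => Prod.mk T ⁻¹' F n, fun n => (hF n).preimage (by fun_prop), ?_⟩
  rw [← preimage_iUnion, ← hUnion]
  rfl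

lemma analyticSet_setOf_notMem_treeIdeal [Countable α] :
    AnalyticSet {p : (List α × List ℕ → Bool) × (List α → Bool) | p.2 ∉ treeIdeal p.1} := by
  obtain ⟨F, hF, hUnion⟩ := exists_isClosed_iUnion_eq_setOf_mem_treeIdeal (α := α)
  have hmeas : MeasurableSet {p : (List α × List ℕ → Bool) × (List α → Bool) |
      p.2 ∈ treeIdeal p.1} :=
    hUnion ▸ MeasurableSet.iUnion fun n => (hF n).measurableSet
  exact hmeas.compl.analyticSet

lemma mem_treeProj_of_infinite_chainFamily {T : List α × List ℕ → Bool} {x : List α → Bool}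
    (hx : x ∈ chainFamily T) {y : ℕ → α} (hinf : {n | x (res y n) = true}.Infinite) :
    y ∈ treeProj T := by
  obtain ⟨φ, hφ, hmem⟩ := extraction_of_frequently_atTop (Nat.frequently_atTop_iff_infinite.2 hinf)
  refine mem_treeProj_of_bounded φ fun k => ?_
  obtain ⟨z, hz, hwit⟩ := hx k (fun i => res y (φ i)) (fun i _ => hmem i) fun i _ =>
    ⟨suffix_res_iff.2 ⟨φ i, (hφ i.lt_succ_self).le, rfl⟩,
      (res_left_injective y).ne (hφ i.lt_succ_self).ne⟩
  refine ⟨z, by simpa using hz, (isPartialWitness_res_iff le_rfl).2 ?_⟩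
  exact (isPartialWitness_res_iff hφ.le_apply).1 hwit

lemma boolIndicator_range_res_mem_chainFamily {T : List α × List ℕ → Bool} {y : ℕ → α}
    {z : ℕ → ℕ} (hz : ∀ n, T (res y n, res z n) = true) {φ : ℕ → ℕ} (hφ : StrictMono φ)
    (hzφ : z ≤ φ) : (range fun i => res y (φ i)).boolIndicator ∈ chainFamily T := by
  intro k t ht hchain
  have hindex : ∀ i ≤ k, ∃ j ≥ i, res y (φ j) = t i := by
    intro i hi
    induction i with
    | zero =>
      obtain ⟨j, hj⟩ := (mem_iff_boolIndicator _ _).2 (ht 0 hi)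
      exact ⟨j, j.zero_le, hj⟩
    | succ i ih =>
      obtain ⟨j, hij, hj⟩ := ih (by omega)
      obtain ⟨j', hj'⟩ := (mem_iff_boolIndicator _ _).2 (ht (i + 1) hi)
      obtain ⟨hsuffix, hne⟩ := hchain i hi
      have hlength : (t i).length < (t (i + 1)).length :=
        hsuffix.length_le.lt_of_ne fun h => hne (hsuffix.eq_of_length h)
      have : j < j' := hφ.lt_iff_lt.1 (by simpa [← hj, ← hj'] using hlength)
      exact ⟨j', by omega, hj'⟩
  have hbound : ∀ i ≤ k, φ i ≤ (t i).length := by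
    intro i hi
    obtain ⟨j, hij, hj⟩ := hindex i hi
    simpa [← hj] using hφ.monotone hij
  refine ⟨z ⊓ fun i => (t i).length, inf_le_right, ?_⟩
  obtain ⟨j, hkj, hj⟩ := hindex k le_rfl
  rw [← hj, isPartialWitness_res_iff (hkj.trans hφ.le_apply)]
  intro n hn
  have htruncate : res (z ⊓ fun i => (t i).length) n = res z n :=
    res_eq_res.2 fun i hi => inf_eq_left.2 ((hzφ i).trans (hbound i (by omega)))
  rw [htruncate]
  exact hz n

lemma exists_mem_chainFamily_infinite_inter {T : List α × List ℕ → Bool} (hT : treeProj T = univ)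
    {S : Set (List α)} (hS : S.Infinite) : ∃ x ∈ chainFamily T, (S ∩ suppB x).Infinite := by
  obtain ⟨C, hCS, hinf, hC | hC⟩ := exists_infinite_subset_isChain_or_isAntichain (· <:+ ·) hS
  · obtain ⟨y, hy⟩ := exists_res_eq_of_isChain hC hinf
    have hlevels : {n | res y n ∈ C}.Infinite := by
      refine Infinite.of_image (res y) (hinf.mono fun s hs => ⟨s.length, ?_, hy s hs⟩)
      rwa [mem_ofPred_eq, hy s hs]
    obtain ⟨z, hz⟩ : y ∈ treeProj T := hT ▸ mem_univ y
    obtain ⟨φ, hφ, hmem⟩ := extraction_forall_of_frequently fun i =>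
      (Nat.frequently_atTop_iff_infinite.2 hlevels).and_eventually (eventually_ge_atTop (z i))
    refine ⟨_, boolIndicator_range_res_mem_chainFamily hz hφ fun i => (hmem i).2, ?_⟩
    rw [suppB_boolIndicator, inter_eq_right.2 (range_subset_iff.2 fun i => hCS (hmem i).1)]
    exact infinite_range_of_injective ((res_left_injective y).comp hφ.injective)
  · refine ⟨_, boolIndicator_mem_chainFamily_of_isAntichain T hC, ?_⟩
    rwa [suppB_boolIndicator, inter_eq_right.2 hCS]

theorem isTallB_treeIdeal_iff {T : List α × List ℕ → Bool} :
    IsTallB (treeIdeal T) ↔ treeProj T = univ := by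
  rw [treeIdeal, isTallB_idealSpanB_iff]
  refine ⟨fun h => eq_univ_of_forall fun y => ?_, fun hT S =>
    exists_mem_chainFamily_infinite_inter hT⟩
  obtain ⟨x, hx, hinf⟩ := h (range (res y)) (infinite_range_of_injective (res_left_injective y))
  refine mem_treeProj_of_infinite_chainFamily hx (Infinite.of_image (res y) (hinf.mono ?_))
  rintro _ ⟨⟨n, rfl⟩, hn⟩
  exact ⟨n, hn, rfl⟩

end TreeIdeal

lemma analyticSet_setOf_exists_comp_notMem {P α : Type*} [TopologicalSpace P] [PolishSpace P]
    {J : Set (ℕ → Bool)} (hJ : AnalyticSet J) {I : P → Set (α → Bool)}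
    (hI : AnalyticSet {p : P × (α → Bool) | p.2 ∉ I p.1}) (e : α → ℕ) :
    AnalyticSet {p : P × (ℕ → ℕ) | ∃ A ∈ J, A ∘ p.2 ∘ e ∉ I p.1} := by
  have hcont : Continuous fun q : (P × (ℕ → ℕ)) × (ℕ → Bool) => (q.1.1, q.2 ∘ q.1.2 ∘ e) := by
    refine (continuous_fst.comp continuous_fst).prodMk <| continuous_pi fun a => ?_
    exact continuous_apply_of_isLocallyConstant
      (g := fun q : (P × (ℕ → ℕ)) × (ℕ → Bool) => q.1.2 (e a)) continuous_snd <|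
      (IsLocallyConstant.iff_continuous _).2 (by fun_prop)
  have hpair : AnalyticSet {q : (P × (ℕ → ℕ)) × (ℕ → Bool) |
      q.2 ∈ J ∧ q.2 ∘ q.1.2 ∘ e ∉ I q.1.1} :=
    analyticSet_inter (hJ.preimage continuous_snd) (hI.preimage hcont)
  convert hpair.image_of_continuous continuous_fst using 1
  ext p
  simp

theorem exists_isTallB_treeIdeal_not_katLE {J : Set (ℕ → Bool)} (hfin : ContainsFinB J)
    (htall : IsTallB J) (hJ : AnalyticSet J) :
    ∃ T : List ℕ × List ℕ → Bool, IsTallB (treeIdeal T) ∧ ¬ KatLE J (treeIdeal T) := by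
  let e : List ℕ ≃ ℕ := Denumerable.eqv (List ℕ)
  obtain ⟨T, hT⟩ := exists_treeProj_eq_section_of_analyticSet <|
    analyticSet_setOf_exists_comp_notMem hJ analyticSet_setOf_notMem_treeIdeal e
  have hreduce : ∀ g : ℕ → ℕ, g ∉ treeProj T ↔ ∀ A ∈ J, A ∘ g ∘ e ∈ treeIdeal T := by
    simp [hT]
  have hIT : IsTallB (treeIdeal T) := by
    by_contra hnot
    obtain ⟨g, hg⟩ := (ne_univ_iff_exists_notMem _).1 (isTallB_treeIdeal_iff.not.1 hnot)
    exact hnot (htall.of_katLE hfin (isIdealB_treeIdeal T).1 ⟨g ∘ e, (hreduce g).1 hg⟩)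
  refine ⟨T, hIT, fun ⟨f, hf⟩ => ?_⟩
  have hproj : f ∘ e.symm ∈ treeProj T := isTallB_treeIdeal_iff.1 hIT ▸ mem_univ _
  exact (hreduce (f ∘ e.symm)).2 (by simpa [Function.comp_def] using hf) hproj

theorem no_minimal_tall_borel_ideal_general {J : Set (ℕ → Bool)} (hfin : ContainsFinB J)
    (htall : IsTallB J) (hJ : AnalyticSet J) :
    ∃ I : Set (ℕ → Bool), IsIdealB I ∧ ContainsFinB I ∧ IsTallB I ∧ IsFsigmaB I ∧ ¬ KatLE J I := by
  obtain ⟨T, hT, hJT⟩ := exists_isTallB_treeIdeal_not_katLE hfin htall hJ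
  let e : List ℕ ≃ ℕ := Denumerable.eqv (List ℕ)
  have hideal : IsIdealB (rkImageB e (treeIdeal T)) := isIdealB_rkImageB e (isIdealB_treeIdeal T)
  exact ⟨rkImageB e (treeIdeal T), hideal,
    containsFinB_rkImageB e.injective (containsFinB_treeIdeal T),
    hT.of_katLE (containsFinB_treeIdeal T) hideal.1 (katLE_rkImageB_equiv e _),
    isFsigmaB_rkImageB e (isFsigmaB_treeIdeal T),
    fun hJI => hJT (hJI.trans (katLE_rkImageB_self e _))⟩

/-- There is no tall Borel ideal on `ℕ` that is Katětov below every tall Borel ideal on `ℕ`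
(ideals here contain all finite sets, as usual). -/
theorem no_minimal_tall_borel_ideal :
    ¬ ∃ J : Set (ℕ → Bool), IsIdealB J ∧ ContainsFinB J ∧ IsTallB J ∧ MeasurableSet J ∧
        ∀ I : Set (ℕ → Bool), IsIdealB I → ContainsFinB I → IsTallB I → MeasurableSet I →
          KatLE J I := by
  rintro ⟨J, -, hJfin, hJtall, hJmeas, hmin⟩
  obtain ⟨I, hI, hfin, htall, hFsigma, hJI⟩ :=
    no_minimal_tall_borel_ideal_general hJfin hJtall hJmeas.analyticSet
  exact hJI (hmin I hI hfin htall hFsigma.measurableSet)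
end

section
/- For every tall analytic ideal J on ℕ there is a tall F_σ ideal I on ℕ such that J ≰_K I. -/
/-!
Work on the tree `List α`. Identifying `List α` with `ℕ`, a map `List α → α` is a sequence
`z : ℕ → α`, so the candidates for a Katětov reduction of `J` to an ideal on the tree are themselves
branches of the tree. A parameter `c` is used to code the set of all `z` such that `(c, z, w)` lies
in a fixed closed set `R` for some `w`, and the ideal attached to `c` is generated by the antichains
and by certain sparse subsets of the branches that `c` codes. By Ramsey's theorem every infinite set
of nodes contains an infinite antichain or an infinite subset of a branch, while an infinite subset
of a branch can belong to the ideal only if `c` codes that branch; so the ideal is tall iff `c`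
codes all branches.

If `J` is analytic, then not being a reduction of `J` to the ideal attached to `c` is an analytic
condition on `(c, z)`. Taking for `R` a universal closed set, a diagonal argument yields a `c` that
codes exactly the `z` that are not reductions of `J` to its own ideal. Since `J` is tall, a
reduction would make the ideal tall, so `c` would code all `z`, including the reduction itself.
Hence there is no reduction, `c` codes all `z`, and the ideal is tall.
-/

open Set Filter Topology MeasureTheory

namespace Katetov

section BoolSets

variable {α β γ : Type}

@[simp]
lemma mem_suppB {x : α → Bool} {a : α} : a ∈ suppB x ↔ x a = true := Iff.rfl

@[simp]
lemma suppB_boolIndicator (S : Set α) : suppB S.boolIndicator = S :=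
  preimage_boolIndicator_true S

-- Without this shortcut, instance search fails already for `ℕ → Bool`.
instance polishSpace_pi {ι X : Type*} [Countable ι] [TopologicalSpace X] [PolishSpace X] :
    PolishSpace (ι → X) := inferInstance

lemma isClopen_setOfPred_mem_suppB {X : Type*} [TopologicalSpace X] {f : X → α → Bool}
    (hf : Continuous f) (a : α) : IsClopen {p | a ∈ suppB (f p)} :=
  (isClopen_discrete {true}).preimage ((continuous_apply a).comp hf)

lemma isClosed_setOfPred_isAntichain (r : α → α → Prop) :
    IsClosed {D : α → Bool | IsAntichain r (suppB D)} := by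
  have hmem (a : α) := (isClopen_setOfPred_mem_suppB continuous_id a).isOpen
  have : {D : α → Bool | IsAntichain r (suppB D)} =
      ⋂ a, ⋂ b, {D | a ∈ suppB D → b ∈ suppB D → a ≠ b → ¬r a b} := by
    ext D
    simp only [mem_iInter]
    exact ⟨fun h a b ha hb => h ha hb, fun h a ha b hb => h a b ha hb⟩
  rw [this]
  exact isClosed_iInter fun a => isClosed_iInter fun b =>
    isClosed_imp (hmem a) (isClosed_imp (hmem b) isClosed_const)

lemma isTallB_of_katLE {J : Set (α → Bool)} {I : Set (β → Bool)}
    (hcover : ∀ a, ∃ x ∈ J, x a = true) (hJ : IsTallB J) (hI : IsIdealB I) (h : KatLE J I) :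
    IsTallB I := by
  obtain ⟨f, hf⟩ := h
  intro A hA
  obtain ⟨y, hy, hyA⟩ : ∃ y ∈ J, (suppB A ∩ f ⁻¹' suppB y).Infinite := by
    by_cases himage : (f '' suppB A).Finite
    · obtain ⟨a, -, ha⟩ : ∃ a ∈ f '' suppB A, (suppB A ∩ f ⁻¹' {a}).Infinite := by
        by_contra! hfib
        exact hA (himage.of_finite_fibers f hfib)
      obtain ⟨y, hy, hya⟩ := hcover a
      exact ⟨y, hy, ha.mono (by gcongr; simpa using hya)⟩
    · obtain ⟨y, hy, hyinf, hyA⟩ := hJ (f '' suppB A).boolIndicator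
        (by rwa [InfiniteB, suppB_boolIndicator])
      refine ⟨y, hy, Infinite.of_image f ?_⟩
      rw [image_inter_preimage]
      refine hyinf.mono fun a ha => ⟨?_, ha⟩
      simpa using (suppB_boolIndicator (f '' suppB A)).subset (hyA a ha)
  refine ⟨(suppB A ∩ f ⁻¹' suppB y).boolIndicator, hI.1 _ (hf y hy) _ ?_, ?_, ?_⟩
  · exact (suppB_boolIndicator _).trans_subset inter_subset_right
  · rwa [InfiniteB, suppB_boolIndicator]
  · exact (suppB_boolIndicator _).trans_subset inter_subset_left

/-- The image `{x | g⁻¹[x] ∈ I}` of a family `I` of subsets of `β` under `g : β → α`, used to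
transfer an ideal to another underlying set along a bijection. -/
def pushforward (g : β → α) (I : Set (β → Bool)) : Set (α → Bool) := {x | x ∘ g ∈ I}

lemma isIdealB_pushforward (g : β → α) {I : Set (β → Bool)} (hI : IsIdealB I) :
    IsIdealB (pushforward g I) :=
  ⟨fun _ hx _ hyx => hI.1 _ hx _ fun b => hyx (g b), fun _ hx _ hy => hI.2 _ hx _ hy⟩

lemma containsFinB_pushforward {g : β → α} (hg : g.Injective) {I : Set (β → Bool)}
    (hI : ContainsFinB I) : ContainsFinB (pushforward g I) :=
  fun x hx => hI (x ∘ g) (hx.preimage hg.injOn)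

lemma isFsigmaB_pushforward (g : β → α) {I : Set (β → Bool)} (hI : IsFsigmaB I) :
    IsFsigmaB (pushforward g I) := by
  obtain ⟨F, hF, rfl⟩ := hI
  refine ⟨fun n => (· ∘ g) ⁻¹' F n, fun n => (hF n).preimage ?_, preimage_iUnion⟩
  exact continuous_pi fun b => continuous_apply (g b)

lemma katLE_of_katLE_pushforward {J : Set (γ → Bool)} {g : β → α} {I : Set (β → Bool)}
    (h : KatLE J (pushforward g I)) : KatLE J I := by
  obtain ⟨f, hf⟩ := h
  exact ⟨f ∘ g, hf⟩

lemma isTallB_pushforward_equiv (e : β ≃ α) {I : Set (β → Bool)} (hI : IsTallB I) :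
    IsTallB (pushforward e I) := by
  intro A hA
  obtain ⟨y, hy, hyinf, hyA⟩ := hI (A ∘ e) (hA.preimage (by simp))
  refine ⟨y ∘ e.symm, by simpa [pushforward, Function.comp_assoc] using hy,
    hyinf.preimage (by simp), fun a ha => by simpa using hyA (e.symm a) ha⟩

end BoolSets

section GeneratedIdeal

variable {β : Type}

/-- The subsets of `β` covered by `n` members of `𝒢`. -/
def coveredBy (𝒢 : Set (β → Bool)) (n : ℕ) : Set (β → Bool) :=
  {A | ∃ D : Fin n → β → Bool, (∀ i, D i ∈ 𝒢) ∧ suppB A ⊆ ⋃ i, suppB (D i)}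

/-- The ideal generated by `𝒢`. -/
def generatedIdeal (𝒢 : Set (β → Bool)) : Set (β → Bool) := ⋃ n, coveredBy 𝒢 n

variable {𝒢 : Set (β → Bool)}

lemma subset_generatedIdeal : 𝒢 ⊆ generatedIdeal 𝒢 :=
  fun D hD => mem_iUnion.2 ⟨1, fun _ => D, fun _ => hD, subset_iUnion_of_subset 0 le_rfl⟩

lemma isIdealB_generatedIdeal (𝒢 : Set (β → Bool)) : IsIdealB (generatedIdeal 𝒢) := by
  simp only [IsIdealB, generatedIdeal, mem_iUnion]
  constructor
  · rintro x ⟨n, D, hD, hx⟩ y hyx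
    exact ⟨n, D, hD, fun b hb => hx (hyx b hb)⟩
  · rintro x ⟨m, D, hD, hx⟩ y ⟨n, E, hE, hy⟩
    refine ⟨m + n, Fin.append D E, Fin.addCases (by simpa using hD) (by simpa using hE), ?_⟩
    intro b hb
    rcases Bool.or_eq_true_iff.1 hb with hb | hb
    · obtain ⟨i, hi⟩ := mem_iUnion.1 (hx hb)
      exact mem_iUnion.2 ⟨Fin.castAdd n i, by simpa using hi⟩
    · obtain ⟨i, hi⟩ := mem_iUnion.1 (hy hb)
      exact mem_iUnion.2 ⟨Fin.natAdd m i, by simpa using hi⟩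

lemma containsFinB_generatedIdeal (h : ∀ b, ∃ D ∈ 𝒢, D b = true) :
    ContainsFinB (generatedIdeal 𝒢) := by
  intro x hx
  choose D hD hDb using h
  have : Finite (suppB x) := hx
  obtain ⟨n, ⟨e⟩⟩ := Finite.exists_equiv_fin (suppB x)
  refine mem_iUnion.2 ⟨n, fun i => D (e.symm i), fun i => hD _, fun b hb => ?_⟩
  exact mem_iUnion.2 ⟨e ⟨b, hb⟩, by simpa using hDb b⟩

lemma exists_infinite_inter_of_mem_generatedIdeal {A : β → Bool} (hA : A ∈ generatedIdeal 𝒢)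
    (hinf : InfiniteB A) : ∃ D ∈ 𝒢, (suppB D ∩ suppB A).Infinite := by
  obtain ⟨n, D, hD, hAD⟩ := mem_iUnion.1 hA
  by_contra! hfin
  refine hinf ((finite_iUnion fun i => hfin (D i) (hD i)).subset ?_)
  rw [← iUnion_inter]
  exact subset_inter hAD Subset.rfl

lemma isClosed_setOfPred_mem_coveredBy {C : Type*} [TopologicalSpace C] {G : Set (C × (β → Bool))}
    (hG : IsClosed G) (n : ℕ) :
    IsClosed {p : C × (β → Bool) | p.2 ∈ coveredBy {D | (p.1, D) ∈ G} n} := by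
  let W : Set ((C × (β → Bool)) × (Fin n → β → Bool)) :=
    {q | (∀ i, (q.1.1, q.2 i) ∈ G) ∧ ∀ b, b ∈ suppB q.1.2 → b ∈ ⋃ i, suppB (q.2 i)}
  have hW : IsClosed W := by
    simp only [W, ofPred_and, ofPred_forall, mem_iUnion]
    refine (isClosed_iInter fun i => hG.preimage (by fun_prop)).inter
      (isClosed_iInter fun b => isClosed_imp ?_ ?_)
    · exact (isClopen_setOfPred_mem_suppB (by fun_prop) b).isOpen
    · rw [ofPred_exists]
      exact isClosed_iUnion_of_finite fun i =>
        (isClopen_setOfPred_mem_suppB (by fun_prop) b).isClosed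
  convert isClosedMap_fst_of_compactSpace W hW using 1
  ext p
  simp [W, coveredBy, subset_def]

end GeneratedIdeal

section Branches

open PiNat

variable {α : Type}

/-- The branch through `z` of the tree of finite sequences. `PiNat.res` lists initial segments in
reverse, so the tree order on `List α` is `<:+`. -/
def branch (z : ℕ → α) : Set (List α) := range (res z)

lemma res_injective_nat (z : ℕ → α) : (res z).Injective :=
  fun m n h => by simpa using congrArg List.length h

lemma res_suffix_res (z : ℕ → α) {m n : ℕ} (h : m ≤ n) : res z m <:+ res z n := by
  induction n, h using Nat.le_induction with
  | base => exact List.suffix_rfl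
  | succ n _ ih => exact ih.trans (List.suffix_cons _ _)

lemma isChain_branch (z : ℕ → α) : IsChain (· <:+ ·) (branch z) := by
  rintro _ ⟨m, rfl⟩ _ ⟨n, rfl⟩ -
  exact (le_total m n).imp (res_suffix_res z) (res_suffix_res z)

lemma infinite_branch (z : ℕ → α) : (branch z).Infinite :=
  infinite_range_of_injective (res_injective_nat z)

lemma exists_mem_branch [Nonempty α] (s : List α) : ∃ z, s ∈ branch z := by
  suffices ∃ z, res z s.length = s from this.imp fun z hz => ⟨_, hz⟩
  induction s with
  | nil => exact ⟨fun _ => Classical.arbitrary α, rfl⟩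
  | cons a s ih =>
    obtain ⟨z, hz⟩ := ih
    refine ⟨Function.update z s.length a, ?_⟩
    rw [List.length_cons, res_succ, Function.update_self, List.cons_inj_right]
    exact (res_eq_res.2 fun i hi => Function.update_of_ne hi.ne a z).trans hz

lemma res_length_of_mem_branch {s : List α} {z : ℕ → α} (h : s ∈ branch z) :
    res z s.length = s := by
  obtain ⟨n, rfl⟩ := h
  rw [res_length]

lemma eq_of_mem_branch {s : List α} {y z : ℕ → α} (hy : s ∈ branch y) (hz : s ∈ branch z) {i : ℕ}
    (hi : i < s.length) : y i = z i :=
  res_eq_res.1 ((res_length_of_mem_branch hy).trans (res_length_of_mem_branch hz).symm) hi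

lemma mem_branch_of_suffix {s t : List α} {z : ℕ → α} (hst : s <:+ t) (ht : t ∈ branch z) :
    s ∈ branch z := by
  have hres : res z s.length <:+ t := by
    rw [← res_length_of_mem_branch ht]
    exact res_suffix_res z hst.length_le
  have hlen := res_length z s.length
  exact ⟨s.length, (List.suffix_of_suffix_length_le hres hst hlen.le).eq_of_length hlen⟩

lemma infinite_preimage_res {S : Set (List α)} {z : ℕ → α} (h : (S ∩ branch z).Infinite) :
    (res z ⁻¹' S).Infinite := by
  refine Infinite.of_image (res z) ?_
  rwa [image_preimage_eq_inter_range]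

lemma exists_subset_branch_of_isChain {S : Set (List α)} (hinf : S.Infinite)
    (hS : IsChain (· <:+ ·) S) : ∃ z, S ⊆ branch z := by
  have : Nonempty α := not_isEmpty_iff.1 fun _ => hinf (toFinite S)
  choose y hy using exists_mem_branch (α := α)
  have hlen : S.InjOn List.length := fun s hs t ht hst =>
    (hS.total hs ht).elim (fun h => h.eq_of_length hst) fun h => (h.eq_of_length hst.symm).symm
  have hlong (i : ℕ) : ∃ t ∈ S, i < t.length := by
    simpa using (hinf.image hlen).exists_gt i
  choose t htS ht using hlong
  refine ⟨fun i => y (t i) i, fun s hs => ⟨s.length, ?_⟩⟩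
  refine (res_eq_res.2 fun i hi => ?_).trans (res_length_of_mem_branch (hy s))
  rcases hS.total hs (htS i) with hst | hts
  · exact eq_of_mem_branch (mem_branch_of_suffix hst (hy (t i))) (hy s) hi
  · exact eq_of_mem_branch (hy (t i)) (mem_branch_of_suffix hts (hy s)) (ht i)

/-- The sets `S` of finite sequences of which at most `i` are shorter than `w i`, for every `i`.
Bounding `w` by the lengths of the members of an infinite `S` is what keeps the witnesses `w` of a
convergent net of thin chains in a compact set. -/
def IsThin (w : ℕ → ℕ) (S : Set (List α)) : Prop := ∀ i : ℕ, {s ∈ S | s.length < w i}.encard ≤ i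

lemma IsThin.le_sup_length {w : ℕ → ℕ} {S : Set (List α)} (h : IsThin w S) {F : Finset (List α)}
    (hF : ↑F ⊆ S) {i : ℕ} (hi : i < F.card) : w i ≤ F.sup List.length := by
  by_contra! hlt
  have hsub : (F : Set (List α)) ⊆ {s ∈ S | s.length < w i} :=
    fun s hs => ⟨hF hs, (Finset.le_sup (f := List.length) hs).trans_lt hlt⟩
  have hcard := (encard_le_encard hsub).trans (h i)
  rw [encard_coe_eq_coe_finsetCard, Nat.cast_le] at hcard
  exact hi.not_ge hcard

lemma exists_infinite_isThin_subset {S : Set (List α)} {z : ℕ → α} (h : (S ∩ branch z).Infinite)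
    (w : ℕ → ℕ) : ∃ D ⊆ S ∩ branch z, D.Infinite ∧ IsThin w D := by
  obtain ⟨φ, hφ, hφS⟩ := extraction_forall_of_frequently
    (P := fun j n => res z n ∈ S ∧ ∀ i ∈ Iic j, w i ≤ n) fun j =>
      (Nat.frequently_atTop_iff_infinite.2 (infinite_preimage_res h)).and_eventually
        ((eventually_all_finite (finite_Iic j)).2 fun i _ => eventually_ge_atTop (w i))
  refine ⟨range (res z ∘ φ), ?_,
    infinite_range_of_injective ((res_injective_nat z).comp hφ.injective), fun i => ?_⟩
  · rintro _ ⟨j, rfl⟩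
    exact ⟨(hφS j).1, φ j, rfl⟩
  · have hsub : {s ∈ range (res z ∘ φ) | s.length < w i} ⊆ (res z ∘ φ) '' Iio i := by
      rintro _ ⟨⟨j, rfl⟩, hj⟩
      refine ⟨j, mem_Iio.2 (not_le.1 fun hij : i ≤ j => hj.not_ge ?_), rfl⟩
      simpa using (hφS j).2 i hij
    calc _ ≤ ((res z ∘ φ) '' Iio i).encard := encard_le_encard hsub
      _ ≤ (Iio i).encard := encard_image_le _ _
      _ = i := by rw [← Finset.coe_Iio, encard_coe_eq_coe_finsetCard, Nat.card_Iio]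

end Branches

lemma exists_infinite_isChain_or_isAntichain {β : Type*} (r : β → β → Prop) [IsTrans β r]
    {S : Set β} (hS : S.Infinite) :
    ∃ T ⊆ S, T.Infinite ∧ (IsChain r T ∨ IsAntichain r T) := by
  let f : ℕ → β := fun n => hS.natEmbedding S n
  have hf : f.Injective := Subtype.val_injective.comp (hS.natEmbedding S).injective
  have hfS (n : ℕ) : f n ∈ S := (hS.natEmbedding S n).2
  suffices ∃ g : ℕ ↪o ℕ, IsChain r (range (f ∘ g)) ∨ IsAntichain r (range (f ∘ g)) by
    obtain ⟨g, hg⟩ := this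
    exact ⟨_, range_subset_iff.2 fun n => hfS _,
      infinite_range_of_injective (hf.comp g.injective), hg⟩
  obtain ⟨g, hg | hg⟩ := exists_increasing_or_nonincreasing_subseq r f
  · refine ⟨g, Or.inl ?_⟩
    rintro _ ⟨m, rfl⟩ _ ⟨n, rfl⟩ hmn
    exact (lt_or_gt_of_ne (ne_of_apply_ne _ hmn)).imp (hg m n) (hg n m)
  obtain ⟨k, hk | hk⟩ := exists_increasing_or_nonincreasing_subseq (Function.swap r) (f ∘ g)
  · refine ⟨k.trans g, Or.inl ?_⟩
    rintro _ ⟨m, rfl⟩ _ ⟨n, rfl⟩ hmn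
    exact (lt_or_gt_of_ne (ne_of_apply_ne _ hmn)).symm.imp (hk n m) (hk m n)
  · refine ⟨k.trans g, Or.inr ?_⟩
    rintro _ ⟨m, rfl⟩ _ ⟨n, rfl⟩ hmn
    rcases lt_or_gt_of_ne (ne_of_apply_ne _ hmn) with hlt | hlt
    · exact hg _ _ (k.strictMono hlt)
    · exact hk _ _ hlt

section TreeIdeal

variable {C : Type*} {α : Type} [TopologicalSpace C]

/-- The pairs `(c, D)` such that `D` is a subset of some branch `z`, thin with respect to some `w`
with `(c, z, w) ∈ R`. -/
def thinChains (R : Set (C × (ℕ → α) × (ℕ → ℕ))) : Set (C × (List α → Bool)) :=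
  {p | ∃ z w, (p.1, z, w) ∈ R ∧ suppB p.2 ⊆ branch z ∧ IsThin w (suppB p.2)}

/-- The pairs `(c, D)` such that `D` is one of the sets generating `treeIdeal R c`. -/
def generators (R : Set (C × (ℕ → α) × (ℕ → ℕ))) : Set (C × (List α → Bool)) :=
  {p | IsAntichain (· <:+ ·) (suppB p.2)} ∪ closure (thinChains R)

/-- The ideal on `List α` generated by the antichains and by the limits of thin chains. The
parameter `c` codes the set of all `z` with `(c, z, w) ∈ R` for some `w`; the closure is taken
jointly in `c`, so that membership in the ideal is `F_σ` as a relation. -/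
def treeIdeal (R : Set (C × (ℕ → α) × (ℕ → ℕ))) (c : C) : Set (List α → Bool) :=
  generatedIdeal {D | (c, D) ∈ generators R}

variable {R : Set (C × (ℕ → α) × (ℕ → ℕ))} {c : C}

lemma isIdealB_treeIdeal (R : Set (C × (ℕ → α) × (ℕ → ℕ))) (c : C) : IsIdealB (treeIdeal R c) :=
  isIdealB_generatedIdeal _

lemma isClosed_generators (R : Set (C × (ℕ → α) × (ℕ → ℕ))) : IsClosed (generators R) :=
  ((isClosed_setOfPred_isAntichain _).preimage continuous_snd).union isClosed_closure

lemma exists_isClosed_setOfPred_mem_treeIdeal (R : Set (C × (ℕ → α) × (ℕ → ℕ))) :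
    ∃ F : ℕ → Set (C × (List α → Bool)), (∀ n, IsClosed (F n)) ∧
      {p : C × (List α → Bool) | p.2 ∈ treeIdeal R p.1} = ⋃ n, F n := by
  refine ⟨_, isClosed_setOfPred_mem_coveredBy (isClosed_generators R), ?_⟩
  ext p
  simp [treeIdeal, generatedIdeal]

lemma isFsigmaB_treeIdeal (R : Set (C × (ℕ → α) × (ℕ → ℕ))) (c : C) :
    IsFsigmaB (treeIdeal R c) := by
  obtain ⟨F, hF, hRF⟩ := exists_isClosed_setOfPred_mem_treeIdeal R
  refine ⟨fun n => Prod.mk c ⁻¹' F n, fun n => (hF n).preimage (by fun_prop), ?_⟩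
  rw [← preimage_iUnion, ← hRF]
  rfl

lemma analyticSet_setOfPred_notMem_treeIdeal [PolishSpace C] [Countable α]
    (R : Set (C × (ℕ → α) × (ℕ → ℕ))) :
    AnalyticSet {p : C × (List α → Bool) | p.2 ∉ treeIdeal R p.1} := by
  obtain ⟨F, hF, hRF⟩ := exists_isClosed_setOfPred_mem_treeIdeal R
  borelize (C × (List α → Bool))
  have hmeas : MeasurableSet {p : C × (List α → Bool) | p.2 ∈ treeIdeal R p.1} :=
    hRF ▸ MeasurableSet.iUnion fun n => (hF n).measurableSet
  exact hmeas.compl.analyticSet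

lemma containsFinB_treeIdeal (R : Set (C × (ℕ → α) × (ℕ → ℕ))) (c : C) :
    ContainsFinB (treeIdeal R c) := by
  refine containsFinB_generatedIdeal fun s => ⟨({s} : Set (List α)).boolIndicator, Or.inl ?_, ?_⟩
  · simp
  · rw [← mem_iff_boolIndicator, mem_singleton_iff]

lemma isTallB_treeIdeal (h : ∀ z, ∃ w, (c, z, w) ∈ R) : IsTallB (treeIdeal R c) := by
  intro A hA
  suffices ∃ D ⊆ suppB A, D.Infinite ∧ (c, D.boolIndicator) ∈ generators R by
    obtain ⟨D, hDA, hD, hDR⟩ := this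
    refine ⟨D.boolIndicator, subset_generatedIdeal hDR, ?_, ?_⟩
    · rwa [InfiniteB, suppB_boolIndicator]
    · exact (suppB_boolIndicator D).trans_subset hDA
  obtain ⟨T, hTA, hT, hchain | hanti⟩ :=
    exists_infinite_isChain_or_isAntichain (· <:+ ·) (S := suppB A) hA
  · obtain ⟨z, hz⟩ := exists_subset_branch_of_isChain hT hchain
    obtain ⟨w, hw⟩ := h z
    obtain ⟨D, hDT, hD, hthin⟩ := exists_infinite_isThin_subset (hT.mono (subset_inter le_rfl hz)) w
    have hDz : D ⊆ branch z := hDT.trans inter_subset_right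
    refine ⟨D, (hDT.trans inter_subset_left).trans hTA, hD, Or.inr (subset_closure ⟨z, w, hw, ?_⟩)⟩
    simpa using ⟨hDz, hthin⟩
  · exact ⟨T, hTA, hT, Or.inl (by simpa using hanti)⟩

lemma exists_eventually_eq_of_eventually_le {X : Type*} (U : Ultrafilter X) {f : X → ℕ} {m : ℕ}
    (h : ∀ᶠ p in U, f p ≤ m) : ∃ k, ∀ᶠ p in U, f p = k := by
  have : ∀ᶠ p in U, ∃ k ∈ Iic m, f p = k := h.mono fun p hp => ⟨f p, hp, rfl⟩
  obtain ⟨k, -, hk⟩ := (Ultrafilter.eventually_exists_mem_iff (finite_Iic m)).1 this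
  exact ⟨k, hk⟩

variable [TopologicalSpace α]

lemma exists_mem_of_mem_closure_thinChains (hR : IsClosed R) {D : List α → Bool}
    (hD : (c, D) ∈ closure (thinChains R)) {z : ℕ → α} (hinf : (suppB D ∩ branch z).Infinite) :
    ∃ w, (c, z, w) ∈ R := by
  -- Along an ultrafilter of thin chains converging to `D`, the branches converge to `z`, and the
  -- witnesses converge because thinness bounds each of their values.
  obtain ⟨U, hUR, hU⟩ := mem_closure_iff_ultrafilter.1 hD
  have : Nonempty (ℕ → α) := ⟨z⟩
  choose! y v hyvR hy hv using fun (p : C × (List α → Bool)) (hp : p ∈ thinChains R) => hp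
  have hmem {s : List α} (hs : s ∈ suppB D) : ∀ᶠ p : C × (List α → Bool) in U, s ∈ suppB p.2 :=
    hU ((isClopen_setOfPred_mem_suppB continuous_snd s).isOpen.mem_nhds hs)
  have hyz (i : ℕ) : ∀ᶠ p in U, y p i = z i := by
    obtain ⟨n, hn, hi⟩ := (infinite_preimage_res hinf).exists_gt i
    filter_upwards [hmem hn, hUR] with p hp hpR
    exact eq_of_mem_branch (hy p hpR hp) ⟨n, rfl⟩ (by simpa using hi)
  have hvw (i : ℕ) : ∃ k, ∀ᶠ p in U, v p i = k := by
    obtain ⟨F, hFD, hF⟩ := (hinf.mono inter_subset_left).exists_subset_card_eq (i + 1)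
    refine exists_eventually_eq_of_eventually_le U (m := F.sup List.length) ?_
    filter_upwards [F.eventually_all.2 fun s hs => hmem (hFD hs), hUR] with p hp hpR
    exact (hv p hpR).le_sup_length hp (by omega)
  choose w hw using hvw
  have hlim : Tendsto (fun p : C × (List α → Bool) => (p.1, y p, v p)) U (𝓝 (c, z, w)) :=
    ((continuous_fst.tendsto (c, D)).mono_left hU).prodMk_nhds <|
      (tendsto_pi_nhds.2 fun i => tendsto_nhds_of_eventually_eq (hyz i)).prodMk_nhds
        (tendsto_pi_nhds.2 fun i => tendsto_nhds_of_eventually_eq (hw i))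
  exact ⟨w, hR.mem_of_tendsto hlim (by filter_upwards [hUR] with p hp using hyvR p hp)⟩

theorem isTallB_treeIdeal_iff (hR : IsClosed R) :
    IsTallB (treeIdeal R c) ↔ ∀ z, ∃ w, (c, z, w) ∈ R := by
  refine ⟨fun htall z => ?_, isTallB_treeIdeal⟩
  obtain ⟨A, hA, hAinf, hAz⟩ := htall (branch z).boolIndicator
    (by simpa [InfiniteB] using infinite_branch z)
  replace hAz : suppB A ⊆ branch z := fun s hs =>
    (suppB_boolIndicator (branch z)).subset (hAz s hs)
  obtain ⟨D, hD, hDA⟩ := exists_infinite_inter_of_mem_generatedIdeal hA hAinf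
  have hinf : (suppB D ∩ branch z).Infinite := hDA.mono (inter_subset_inter_right _ hAz)
  rcases hD with hanti | hlim
  · exact (hinf (inter_subsingleton_of_isAntichain_of_isChain hanti (isChain_branch z)).finite).elim
  · exact exists_mem_of_mem_closure_thinChains hR hlim hinf

end TreeIdeal

section Universal

variable {X : Type*} [TopologicalSpace X]

lemma exists_isClosed_diagonal_universal [SecondCountableTopology X] :
    ∃ R : Set ((ℕ → Bool) × X), IsClosed R ∧
      ∀ E : Set ((ℕ → Bool) × X), IsClosed E → ∃ c, ∀ x, (c, x) ∈ R ↔ (c, x) ∈ E := by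
  obtain ⟨B, hBc, -, hB⟩ := TopologicalSpace.exists_countable_basis ((ℕ → Bool) × X)
  obtain ⟨b, hb⟩ := (hBc.insert ∅).exists_eq_range (insert_nonempty _ _)
  replace hB : TopologicalSpace.IsTopologicalBasis (range b) := hb ▸ hB.insert_empty
  refine ⟨{p | ∀ n, p.1 n = true → p ∉ b n}, ?_, fun E hE => ?_⟩
  · simp only [ofPred_forall]
    refine isClosed_iInter fun n => isClosed_imp ?_ (hB.isOpen ⟨n, rfl⟩).isClosed_compl
    exact (isClopen_setOfPred_mem_suppB continuous_fst n).isOpen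
  · classical
    refine ⟨fun n => decide (Disjoint (b n) E), fun x => ⟨fun hx => ?_, fun hx n hn hxb => ?_⟩⟩
    · by_contra hxE
      obtain ⟨_, ⟨n, rfl⟩, hxb, hbE⟩ := hB.exists_subset_of_mem_open hxE hE.isOpen_compl
      exact hx n (decide_eq_true (disjoint_compl_left.mono_left hbE)) hxb
    · exact disjoint_left.1 (of_decide_eq_true hn) hxb hx

lemma exists_isClosed_of_analyticSet [T2Space X] {S : Set X} (hS : AnalyticSet S) :
    ∃ E : Set (X × (ℕ → ℕ)), IsClosed E ∧ ∀ x, x ∈ S ↔ ∃ w, (x, w) ∈ E := by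
  rw [AnalyticSet] at hS
  rcases hS with rfl | ⟨f, hf, rfl⟩
  · exact ⟨∅, isClosed_empty, by simp⟩
  · exact ⟨{q | f q.2 = q.1}, isClosed_eq (by fun_prop) (by fun_prop), by simp⟩

lemma exists_isClosed_fixed_point [SecondCountableTopology X] [T2Space X]
    {S : Set ((ℕ → Bool) × X × (ℕ → ℕ)) → Set ((ℕ → Bool) × X)} (hS : ∀ R, AnalyticSet (S R)) :
    ∃ R, IsClosed R ∧ ∃ c, ∀ x, (∃ w, (c, x, w) ∈ R) ↔ (c, x) ∈ S R := by
  obtain ⟨R, hR, huniv⟩ := exists_isClosed_diagonal_universal (X := X × (ℕ → ℕ))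
  obtain ⟨E, hE, hES⟩ := exists_isClosed_of_analyticSet (hS R)
  obtain ⟨c, hc⟩ := huniv _ (hE.preimage (Homeomorph.prodAssoc _ _ _).symm.continuous)
  exact ⟨R, hR, c, fun x => by simp [hc, hES, Homeomorph.prodAssoc]⟩

end Universal

lemma analyticSet_setOfPred_exists_comp_notMem {C ι α β : Type*} [TopologicalSpace C]
    [PolishSpace C] [Countable ι] [Countable α] [TopologicalSpace α] [DiscreteTopology α]
    {J : Set (α → Bool)} (hJ : AnalyticSet J) {K : C → Set (β → Bool)}
    (hK : AnalyticSet {p : C × (β → Bool) | p.2 ∉ K p.1}) (g : β → ι) :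
    AnalyticSet {p : C × (ι → α) | ∃ x ∈ J, x ∘ p.2 ∘ g ∉ K p.1} := by
  rw [AnalyticSet] at hJ
  rcases hJ with rfl | ⟨f, hf, rfl⟩
  · simpa using analyticSet_empty
  let φ : (ℕ → ℕ) × C × (ι → α) → C × (β → Bool) := fun q => (q.2.1, f q.1 ∘ q.2.2 ∘ g)
  have heval : Continuous fun q : (α → Bool) × α => q.1 q.2 :=
    continuous_prod_of_discrete_right.2 fun a => continuous_apply a
  have hφ : Continuous φ := by
    refine (by fun_prop : Continuous fun q : (ℕ → ℕ) × C × (ι → α) => q.2.1).prodMk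
      (continuous_pi fun b => ?_)
    exact heval.comp (g := fun q => q.1 q.2)
      (by fun_prop : Continuous fun q : (ℕ → ℕ) × C × (ι → α) => (f q.1, q.2.2 (g b)))
  convert (hK.preimage hφ).image_of_continuous continuous_snd using 1
  ext p
  simp [φ]

theorem exists_treeIdeal_not_katLE {α : Type} [Countable α] [Nonempty α] {J : Set (α → Bool)}
    (hcover : ∀ a, ∃ x ∈ J, x a = true) (htall : IsTallB J) (hJ : AnalyticSet J) :
    ∃ (R : Set ((ℕ → Bool) × (ℕ → α) × (ℕ → ℕ))) (c : ℕ → Bool),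
      IsTallB (treeIdeal R c) ∧ ¬KatLE J (treeIdeal R c) := by
  let : TopologicalSpace α := ⊥
  have : DiscreteTopology α := ⟨rfl⟩
  obtain ⟨e⟩ : Nonempty (ℕ ≃ List α) := nonempty_equiv_of_countable
  obtain ⟨R, hR, c, hfix⟩ := exists_isClosed_fixed_point fun R : Set (_ × (ℕ → α) × _) =>
    analyticSet_setOfPred_exists_comp_notMem hJ (analyticSet_setOfPred_notMem_treeIdeal R) e.symm
  change ∀ z, _ ↔ ∃ x ∈ J, x ∘ z ∘ e.symm ∉ treeIdeal R c at hfix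
  have hnot : ¬KatLE J (treeIdeal R c) := by
    intro h
    have hR_all := (isTallB_treeIdeal_iff hR).1
      (isTallB_of_katLE hcover htall (isIdealB_treeIdeal R c) h)
    obtain ⟨f, hf⟩ := h
    obtain ⟨x, hx, hxf⟩ := (hfix (f ∘ e)).1 (hR_all (f ∘ e))
    exact hxf (by simpa [Function.comp_def] using hf x hx)
  refine ⟨R, c, isTallB_treeIdeal fun z => (hfix z).2 ?_, hnot⟩
  by_contra! hz
  exact hnot ⟨z ∘ e.symm, hz⟩

end Katetov

open Katetov

theorem tall_analytic_not_below_some_fSigma_general {α : Type} [Countable α] [Nonempty α]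
    (J : Set (α → Bool)) (hJcover : ∀ a, ∃ x ∈ J, x a = true) (hJtall : IsTallB J)
    (hJan : AnalyticSet J) :
    ∃ I : Set (ℕ → Bool), IsIdealB I ∧ ContainsFinB I ∧ IsTallB I ∧ IsFsigmaB I ∧ ¬KatLE J I := by
  obtain ⟨R, c, htall, hnot⟩ := exists_treeIdeal_not_katLE hJcover hJtall hJan
  obtain ⟨e⟩ : Nonempty (List α ≃ ℕ) := nonempty_equiv_of_countable
  exact ⟨pushforward e (treeIdeal R c), isIdealB_pushforward e (isIdealB_treeIdeal R c),
    containsFinB_pushforward e.injective (containsFinB_treeIdeal R c),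
    isTallB_pushforward_equiv e htall, isFsigmaB_pushforward e (isFsigmaB_treeIdeal R c),
    fun h => hnot (katLE_of_katLE_pushforward h)⟩

/-- For every tall analytic ideal `J` on `ℕ` (containing all finite sets, as usual) there is a
tall `F_σ` ideal `I` on `ℕ` such that `J ≰_K I`. -/
theorem tall_analytic_not_below_some_fSigma (J : Set (ℕ → Bool)) (hJ : IsIdealB J)
    (hJfin : ContainsFinB J) (hJtall : IsTallB J) (hJan : MeasureTheory.AnalyticSet J) :
    ∃ I : Set (ℕ → Bool), IsIdealB I ∧ ContainsFinB I ∧ IsTallB I ∧ IsFsigmaB I ∧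
      ¬ KatLE J I := by
  exact tall_analytic_not_below_some_fSigma_general J (fun n => ⟨({n} : Set ℕ).boolIndicator,
    hJfin _ (by simp), (mem_iff_boolIndicator _ _).1 rfl⟩) hJtall hJan
end

section
/- For every Borel function c : 2^ℕ → ℕ^ℕ, the ideal I_c is a tall Borel ideal on 2^{<ω}. -/
/-- A chain in `2^{<ω}`: any two elements are comparable under end-extension (prefix). -/
def IsChainPre (S : Set (List Bool)) : Prop :=
  ∀ a ∈ S, ∀ b ∈ S, a <+: b ∨ b <+: a

/-- An antichain in `2^{<ω}`: distinct elements are incomparable under end-extension. -/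
def IsAntichainPre (S : Set (List Bool)) : Prop :=
  ∀ a ∈ S, ∀ b ∈ S, a ≠ b → ¬ a <+: b ∧ ¬ b <+: a


/-- The initial segment `x↾m` of `x ∈ 2^ℕ`, as an element of `2^{<ω}`. -/
def seg (x : ℕ → Bool) (m : ℕ) : List Bool := List.ofFn (fun i : Fin m => x i)

/-- Generators of the ideal `I_c`: antichains; the blocks `{x↾m : m ∈ c(x)⁻¹(n)}` of a branch;
and sets of initial segments of a branch meeting each block `{x↾m : m ∈ c(x)⁻¹(n)}` in at most
one point. -/
def GenIc (c : (ℕ → Bool) → (ℕ → ℕ)) (S : Set (List Bool)) : Prop :=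
  IsAntichainPre S ∨
  (∃ (x : ℕ → Bool) (n : ℕ), S = {s | ∃ m, c x m = n ∧ s = seg x m}) ∨
  (∃ x : ℕ → Bool, (∀ s ∈ S, ∃ m, s = seg x m) ∧
    ∀ n : ℕ, {s ∈ S | ∃ m, c x m = n ∧ s = seg x m}.Subsingleton)

/-- The ideal `I_c` on `2^{<ω}`, generated by the sets satisfying `GenIc c`. -/
def IdealIc (c : (ℕ → Bool) → (ℕ → ℕ)) : Set (List Bool → Bool) :=
  {y | ∃ (k : ℕ) (F : Fin k → Set (List Bool)), (∀ i, GenIc c (F i)) ∧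
        ∀ s : List Bool, y s = true → ∃ i, s ∈ F i}

/-!
A set `S` lies in `I_c` iff there is a finite set `X` of branches, each meeting `S` infinitely often
in a trace that is small for the partition given by `c`, such that chains in the rest of `S` have
bounded length: by Mirsky's theorem the rest is then a finite union of antichains, and conversely
every generator has this form. The set `X` is unique, since a branch meeting `S` infinitely often
and lying outside `X` would leave an infinite chain off `X`. Hence `I_c` is the projection of a
Borel set of pairs `(S, X)` with at most one `X` over each `S`, and is Borel by Lusin–Souslin.

Tallness is Ramsey's theorem: an infinite `S` contains an infinite antichain, or infinitely many
points of one branch, and then infinitely many in one block or a transversal of infinitely many.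
-/

open Set

section GeneratedIdeal

variable {α β κ : Type*} {𝒢 ℋ : Set α → Prop}

/-- The ideal of subsets of `α` generated by the sets satisfying `𝒢`, given by its closure
properties so that it comes with an induction principle. -/
inductive GeneratedIdeal (𝒢 : Set α → Prop) : Set α → Prop
  | basic {S : Set α} : 𝒢 S → GeneratedIdeal 𝒢 S
  | empty : GeneratedIdeal 𝒢 ∅
  | mono {S T : Set α} : GeneratedIdeal 𝒢 T → S ⊆ T → GeneratedIdeal 𝒢 S
  | union {S T : Set α} : GeneratedIdeal 𝒢 S → GeneratedIdeal 𝒢 T → GeneratedIdeal 𝒢 (S ∪ T)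

namespace GeneratedIdeal

theorem biUnion {I : Set κ} (hI : I.Finite) {F : κ → Set α}
    (hF : ∀ i ∈ I, GeneratedIdeal 𝒢 (F i)) : GeneratedIdeal 𝒢 (⋃ i ∈ I, F i) := by
  induction I, hI using Set.Finite.induction_on with
  | empty => simpa only [biUnion_empty] using empty
  | insert _ _ ih =>
    rw [biUnion_insert]
    exact (hF _ (mem_insert _ _)).union (ih fun i hi => hF i (mem_insert_of_mem _ hi))

theorem exists_finite_cover {S : Set α} (hS : GeneratedIdeal 𝒢 S) :
    ∃ T : Set (Set α), T.Finite ∧ (∀ G ∈ T, 𝒢 G) ∧ S ⊆ ⋃₀ T := by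
  induction hS with
  | @basic S hS => exact ⟨{S}, finite_singleton S, by simpa using hS, by simp⟩
  | empty => exact ⟨∅, finite_empty, by simp, empty_subset _⟩
  | mono _ hsub ih =>
    obtain ⟨T, hT, hG, hcover⟩ := ih
    exact ⟨T, hT, hG, hsub.trans hcover⟩
  | union _ _ ih ih' =>
    obtain ⟨T, hT, hG, hcover⟩ := ih
    obtain ⟨T', hT', hG', hcover'⟩ := ih'
    refine ⟨T ∪ T', hT.union hT', fun G hGT => hGT.elim (hG G) (hG' G), ?_⟩
    rw [sUnion_union]
    exact union_subset_union hcover hcover'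

theorem mono_generators {S : Set α} (hS : GeneratedIdeal 𝒢 S) (h : ∀ G, 𝒢 G → ℋ G) :
    GeneratedIdeal ℋ S := by
  induction hS with
  | basic hG => exact basic (h _ hG)
  | empty => exact empty
  | mono _ hsub ih => exact ih.mono hsub
  | union _ _ ih ih' => exact ih.union ih'

theorem image {ℋ : Set β → Prop} {φ : α → β} {S : Set α} (hS : GeneratedIdeal 𝒢 S)
    (h : ∀ G, 𝒢 G → ℋ (φ '' G)) : GeneratedIdeal ℋ (φ '' S) := by
  induction hS with
  | basic hG => exact basic (h _ hG)
  | empty => simpa only [image_empty] using empty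
  | mono _ hsub ih => exact ih.mono (image_mono hsub)
  | union _ _ ih ih' => simpa only [image_union] using ih.union ih'

end GeneratedIdeal

end GeneratedIdeal

section ChainHeight

variable {α : Type*} {r : α → α → Prop} {s t : Set α}

theorem chainHeight_ne_top_of_isAntichain (hs : IsAntichain r s) : s.chainHeight r ≠ ⊤ := by
  refine ne_top_of_le_ne_top ENat.one_ne_top (iSup_le fun ⟨u, hus, hu⟩ => ?_)
  exact encard_le_one_iff_subsingleton.mpr
    (subsingleton_of_isChain_of_isAntichain hu (hs.subset hus))

theorem chainHeight_union_le :
    (s ∪ t).chainHeight r ≤ s.chainHeight r + t.chainHeight r := by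
  refine iSup_le fun ⟨u, hu, hchain⟩ => ?_
  calc u.encard = (u ∩ s ∪ u ∩ t).encard := by rw [← inter_union_distrib_left,
        inter_eq_left.mpr hu]
    _ ≤ (u ∩ s).encard + (u ∩ t).encard := encard_union_le _ _
    _ ≤ s.chainHeight r + t.chainHeight r := add_le_add
        (encard_le_chainHeight_of_isChain _ _ inter_subset_right (hchain.mono inter_subset_left))
        (encard_le_chainHeight_of_isChain _ _ inter_subset_right (hchain.mono inter_subset_left))

theorem chainHeight_union_ne_top (hs : s.chainHeight r ≠ ⊤) (ht : t.chainHeight r ≠ ⊤) :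
    (s ∪ t).chainHeight r ≠ ⊤ :=
  ne_top_of_le_ne_top (WithTop.add_ne_top.mpr ⟨hs, ht⟩) chainHeight_union_le

theorem chainHeight_ne_top_mono (ht : t.chainHeight r ≠ ⊤) (hst : s ⊆ t) :
    s.chainHeight r ≠ ⊤ :=
  ne_top_of_le_ne_top ht (chainHeight_mono _ _ _ hst)

theorem isAntichain_chainHeight_below_eq [IsPartialOrder α r] (n : ℕ) :
    IsAntichain r {a ∈ s | {b ∈ s | r b a}.chainHeight r = n} := by
  rintro a ⟨-, ha⟩ b ⟨hbs, hb⟩ hab hrab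
  obtain ⟨u, hu, hcard, hchain⟩ :=
    exists_eq_chainHeight_of_chainHeight_ne_top {c ∈ s | r c a} r (by simp [ha])
  have hub : ∀ c ∈ u, r c b := fun c hc => trans_of r (hu hc).2 hrab
  have hbu : b ∉ u := fun hmem => hab (antisymm_of r hrab (hu hmem).2)
  have hchain' : IsChain r (insert b u) := hchain.insert fun c hc _ => Or.inr (hub c hc)
  have hsub : insert b u ⊆ {c ∈ s | r c b} :=
    insert_subset ⟨hbs, refl_of r b⟩ fun c hc => ⟨(hu hc).1, hub c hc⟩
  have hle := encard_le_chainHeight_of_isChain _ _ hsub hchain'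
  rw [encard_insert_of_notMem hbu, hcard, ha, hb] at hle
  exact absurd hle (by norm_cast; omega)

/-- Mirsky's theorem: rank each point of `s` by the height of the part of `s` below it. -/
theorem generatedIdeal_isAntichain_of_chainHeight_ne_top [IsPartialOrder α r]
    (hs : s.chainHeight r ≠ ⊤) : GeneratedIdeal (IsAntichain r) s := by
  obtain ⟨k, hk⟩ := ENat.ne_top_iff_exists.mp hs
  refine (GeneratedIdeal.biUnion (finite_le_nat k) fun n _ =>
    .basic (isAntichain_chainHeight_below_eq (s := s) n)).mono fun a ha => ?_
  have hle : {b ∈ s | r b a}.chainHeight r ≤ k := hk ▸ chainHeight_mono _ _ _ (sep_subset _ _)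
  obtain ⟨n, hn, hnk⟩ := ENat.le_natCast_iff.mp hle
  exact mem_biUnion hnk ⟨ha, hn⟩

theorem measurableSet_chainHeight_eq_top [Countable α] :
    MeasurableSet {s : Set α | s.chainHeight r = ⊤} := by
  have heq : {s : Set α | s.chainHeight r = ⊤} =
      {s | ∀ n : ℕ, ∃ u : Finset α, (u.card = n ∧ IsChain r (u : Set α)) ∧ ∀ a ∈ u, a ∈ s} := by
    ext s
    simp only [chainHeight_eq_top_iff, mem_ofPred_eq]
    refine forall_congr' fun n => ⟨?_, ?_⟩
    · rintro ⟨u, hus, hcard, hu⟩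
      lift u to Finset α using finite_of_encard_eq_coe hcard
      rw [encard_coe_eq_coe_finsetCard, Nat.cast_inj] at hcard
      exact ⟨u, ⟨hcard, hu⟩, hus⟩
    · rintro ⟨u, ⟨hcard, hu⟩, hus⟩
      exact ⟨u, hus, by rw [encard_coe_eq_coe_finsetCard, hcard], hu⟩
  rw [heq]
  refine measurableSet_setOfPred.mpr ?_
  fun_prop

theorem exists_infinite_isChain_or_isAntichain [IsTrans α r] (hs : s.Infinite) :
    ∃ t ⊆ s, t.Infinite ∧ (IsChain r t ∨ IsAntichain r t) := by
  let f : ℕ → α := fun n => hs.natEmbedding s n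
  have hf : Function.Injective f := Subtype.val_injective.comp (hs.natEmbedding s).injective
  have hsub (g : ℕ → ℕ) : range (f ∘ g) ⊆ s :=
    range_subset_iff.mpr fun n => (hs.natEmbedding s (g n)).2
  have hinf (g : ℕ ↪o ℕ) : (range (f ∘ g)).Infinite :=
    infinite_range_of_injective (hf.comp g.injective)
  have htotal (g : ℕ → ℕ) (h : ∀ m n, m < n → r (f (g m)) (f (g n)) ∨ r (f (g n)) (f (g m))) :
      IsChain r (range (f ∘ g)) := by
    rintro _ ⟨m, rfl⟩ _ ⟨n, rfl⟩ hne
    rcases lt_trichotomy m n with hlt | rfl | hlt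
    exacts [h m n hlt, absurd rfl hne, (h n m hlt).symm]
  obtain ⟨g, hup | hup⟩ := exists_increasing_or_nonincreasing_subseq r f
  · exact ⟨_, hsub g, hinf g, .inl (htotal g fun m n h => .inl (hup m n h))⟩
  obtain ⟨g', hdown | hdown⟩ := exists_increasing_or_nonincreasing_subseq (Function.swap r) (f ∘ g)
  · exact ⟨_, hsub _, hinf (g'.trans g), .inl (htotal _ fun m n h => .inr (hdown m n h))⟩
  refine ⟨_, hsub _, hinf (g'.trans g), .inr ?_⟩
  rintro _ ⟨m, rfl⟩ _ ⟨n, rfl⟩ hne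
  rcases lt_trichotomy m n with hlt | rfl | hlt
  exacts [hup _ _ (g'.strictMono hlt), absurd rfl hne, hdown n m hlt]

end ChainHeight

section BoundedFibers

open Filter

variable {α β : Type*} {A B : Set α} {f : α → ℕ}

/-- All but finitely many fibers of `f` meet `A` in at most `M` points, for some `M`. This is the
ideal on `α` generated by the fibers of `f` and the sets on which `f` is injective: the ideal
`ED` when `f` is the first projection of `ℕ × ℕ`. -/
def HasEventuallyBoundedFibers (f : α → ℕ) (A : Set α) : Prop :=
  ∃ M : ℕ, ∀ᶠ n in atTop, (A ∩ f ⁻¹' {n}).encard ≤ M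

theorem encard_inter_preimage_singleton_le_one {f : α → β} (hf : InjOn f A) (b : β) :
    (A ∩ f ⁻¹' {b}).encard ≤ 1 :=
  encard_le_one_iff_subsingleton.mpr fun _ ha _ ha' => hf ha.1 ha'.1 (ha.2.trans ha'.2.symm)

namespace HasEventuallyBoundedFibers

theorem mono (hB : HasEventuallyBoundedFibers f B) (hAB : A ⊆ B) :
    HasEventuallyBoundedFibers f A := by
  obtain ⟨M, hM⟩ := hB
  exact ⟨M, hM.mono fun n hn => (encard_le_encard (inter_subset_inter_left _ hAB)).trans hn⟩

theorem union (hA : HasEventuallyBoundedFibers f A) (hB : HasEventuallyBoundedFibers f B) :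
    HasEventuallyBoundedFibers f (A ∪ B) := by
  obtain ⟨M, hM⟩ := hA
  obtain ⟨N, hN⟩ := hB
  refine ⟨M + N, (hM.and hN).mono fun n hn => ?_⟩
  rw [union_inter_distrib_right, Nat.cast_add]
  exact (encard_union_le _ _).trans (add_le_add hn.1 hn.2)

theorem of_finite (hA : A.Finite) : HasEventuallyBoundedFibers f A := by
  refine ⟨hA.toFinset.card, .of_forall fun n => ?_⟩
  rw [← hA.encard_eq_coe_toFinset_card]
  exact encard_le_encard inter_subset_left

theorem of_injOn (hf : InjOn f A) : HasEventuallyBoundedFibers f A :=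
  ⟨1, .of_forall fun n => by simpa using encard_inter_preimage_singleton_le_one hf n⟩

theorem preimage_singleton (n : ℕ) : HasEventuallyBoundedFibers f (f ⁻¹' {n}) := by
  refine ⟨0, (eventually_gt_atTop n).mono fun k hk => ?_⟩
  have hdisj : f ⁻¹' {n} ∩ f ⁻¹' {k} = ∅ :=
    (disjoint_singleton.mpr hk.ne).preimage f |>.inter_eq
  simp [hdisj]

end HasEventuallyBoundedFibers

theorem generatedIdeal_injOn_of_encard_le {f : α → β} {M : ℕ}
    (hA : ∀ b, (A ∩ f ⁻¹' {b}).encard ≤ M) : GeneratedIdeal (InjOn f) A := by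
  induction M generalizing A with
  | zero =>
    suffices A = ∅ from this ▸ .empty
    refine eq_empty_of_forall_notMem fun a ha => ?_
    have hempty : A ∩ f ⁻¹' {f a} = ∅ := by simpa using hA (f a)
    exact hempty.subset ⟨ha, rfl⟩
  | succ M ih =>
    obtain ⟨T, hTA, hT⟩ := exists_subset_bijOn A f
    suffices ∀ b, ((A \ T) ∩ f ⁻¹' {b}).encard ≤ M from
      ((ih this).union (.basic hT.injOn)).mono (by rw [sdiff_union_of_subset hTA])
    intro b
    by_cases hb : b ∈ f '' A
    · obtain ⟨a, haT, rfl⟩ := hT.surjOn hb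
      have hsub : insert a ((A \ T) ∩ f ⁻¹' {f a}) ⊆ A ∩ f ⁻¹' {f a} :=
        insert_subset ⟨hTA haT, rfl⟩ (inter_subset_inter_left _ sdiff_subset)
      have hcard := (encard_le_encard hsub).trans (hA (f a))
      rw [encard_insert_of_notMem fun h => h.1.2 haT, Nat.cast_succ] at hcard
      exact (WithTop.add_le_add_iff_right ENat.one_ne_top).mp hcard
    · have hempty : (A \ T) ∩ f ⁻¹' {b} = ∅ :=
        eq_empty_of_forall_notMem fun a ha => hb ⟨a, ha.1.1, ha.2⟩
      simp [hempty]

theorem HasEventuallyBoundedFibers.generatedIdeal (hA : HasEventuallyBoundedFibers f A) :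
    GeneratedIdeal (fun B => (∃ n, B = f ⁻¹' {n}) ∨ InjOn f B) A := by
  obtain ⟨M, hM⟩ := hA
  obtain ⟨N, hN⟩ := eventually_atTop.mp hM
  have hlow : GeneratedIdeal (fun B => (∃ n, B = f ⁻¹' {n}) ∨ InjOn f B)
      (⋃ n ∈ Iio N, f ⁻¹' {n}) :=
    .biUnion (finite_Iio N) fun n _ => .basic (.inl ⟨n, rfl⟩)
  have hhigh : GeneratedIdeal (InjOn f) (A ∩ f ⁻¹' Ici N) := by
    refine generatedIdeal_injOn_of_encard_le (M := M) fun n => ?_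
    by_cases hn : N ≤ n
    · exact (encard_le_encard (inter_subset_inter_left _ inter_subset_left)).trans (hN n hn)
    · have hempty : A ∩ f ⁻¹' Ici N ∩ f ⁻¹' {n} = ∅ :=
        eq_empty_of_forall_notMem fun a ha => hn (ha.2 ▸ ha.1.2)
      simp [hempty]
  refine (hlow.union (hhigh.mono_generators fun _ => .inr)).mono fun a ha => ?_
  rcases lt_or_ge (f a) N with h | h
  · exact .inl (mem_biUnion h rfl)
  · exact .inr ⟨ha, h⟩

theorem exists_infinite_fiber_or_infinite_injOn {f : α → β} (hA : A.Infinite) :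
    (∃ b, (A ∩ f ⁻¹' {b}).Infinite) ∨ ∃ T ⊆ A, T.Infinite ∧ InjOn f T := by
  refine or_iff_not_imp_left.mpr fun hfib => ?_
  push Not at hfib
  obtain ⟨T, hTA, hT⟩ := exists_subset_bijOn A f
  refine ⟨T, hTA, fun hTfin => hA ?_, hT.injOn⟩
  have himage : (f '' A).Finite := hT.image_eq ▸ hTfin.image f
  exact Set.Finite.of_finite_fibers f himage fun b _ => hfib b

theorem measurableSet_hasEventuallyBoundedFibers {Ω : Type*} [MeasurableSpace Ω] [Countable α]
    {A : Ω → Set α} {g : Ω → α → ℕ} (hA : Measurable A) (hg : Measurable g) :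
    MeasurableSet {ω | HasEventuallyBoundedFibers (g ω) (A ω)} := by
  have hfiber (n : ℕ) : Measurable fun ω => (A ω ∩ g ω ⁻¹' {n}).encard := by
    refine measurable_encard.comp (measurable_set_iff.mpr fun a => ?_)
    simp only [mem_inter_iff, mem_preimage, mem_singleton_iff]
    exact (measurable_set_iff.mp hA a).and (by fun_prop)
  simp only [HasEventuallyBoundedFibers, eventually_atTop, ofPred_exists, ofPred_forall]
  exact .iUnion fun M => .iUnion fun N => .iInter fun n => .iInter fun _ =>
    hfiber n (.of_discrete (s := Iic (M : ℕ∞)))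

end BoundedFibers

section FiniteSections

variable {Ω Y : Type*}

theorem exists_strictMono_comp_range_eq {α : Type*} [LinearOrder α] {f : Y → α}
    (hf : Function.Injective f) {X : Set Y} (hX : X.Finite) :
    ∃ (k : ℕ) (t : Fin k → Y), StrictMono (f ∘ t) ∧ range t = X := by
  classical
  let _ : LinearOrder Y := LinearOrder.lift' f hf
  let t := hX.toFinset.orderEmbOfFin rfl
  exact ⟨_, t, fun _ _ h => t.strictMono h, by simp [t]⟩

/-- Lusin–Souslin uniformization for finite witnesses: the increasing enumeration of the witness
with respect to a Borel linear order on `Y` makes the projection injective. -/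
theorem measurableSet_exists_finite_of_unique [MeasurableSpace Ω] [StandardBorelSpace Ω]
    [MeasurableSpace Y] [StandardBorelSpace Y] {R : Ω → Set Y → Prop}
    (hR : ∀ k : ℕ, MeasurableSet {p : Ω × (Fin k → Y) | R p.1 (range p.2)})
    (huniq : ∀ ω X X', X.Finite → X'.Finite → R ω X → R ω X' → X = X') :
    MeasurableSet {ω | ∃ X : Set Y, X.Finite ∧ R ω X} := by
  obtain ⟨f, hf⟩ := MeasureTheory.exists_measurableEmbedding_real Y
  let P (k : ℕ) : Set (Ω × (Fin k → Y)) := {p | StrictMono (f ∘ p.2) ∧ R p.1 (range p.2)}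
  have hP (k : ℕ) : MeasurableSet (P k) := by
    have hcoord (i : Fin k) : Measurable fun p : Ω × (Fin k → Y) => f (p.2 i) :=
      hf.measurable.comp ((measurable_pi_apply i).comp measurable_snd)
    have hmono : MeasurableSet {p : Ω × (Fin k → Y) | StrictMono (f ∘ p.2)} := by
      simp only [StrictMono, ofPred_forall]
      exact .iInter fun i => .iInter fun j => .iInter fun _ =>
        measurableSet_lt (hcoord i) (hcoord j)
    exact hmono.inter (hR k)
  have hinj (k : ℕ) : InjOn Prod.fst (P k) := by
    rintro ⟨ω, t⟩ ⟨ht, hωt⟩ ⟨_, u⟩ ⟨hu, hωu⟩ rfl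
    have hrange : range t = range u := huniq ω _ _ (finite_range t) (finite_range u) hωt hωu
    have hcomp : f ∘ t = f ∘ u := by
      rw [← StrictMono.range_inj ht hu, range_comp, range_comp, hrange]
    rw [hf.injective.comp_left hcomp]
  have heq : {ω | ∃ X : Set Y, X.Finite ∧ R ω X} = ⋃ k, Prod.fst '' P k := by
    ext ω
    simp only [mem_iUnion, mem_ofPred_eq]
    constructor
    · rintro ⟨X, hX, hωX⟩
      obtain ⟨k, t, ht, rfl⟩ := exists_strictMono_comp_range_eq hf.injective hX
      exact ⟨k, (ω, t), ⟨ht, hωX⟩, rfl⟩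
    · rintro ⟨k, ⟨_, t⟩, ⟨-, hωt⟩, rfl⟩
      exact ⟨range t, finite_range t, hωt⟩
  rw [heq]
  exact .iUnion fun k => (hP k).image_of_measurable_injOn measurable_fst (hinj k)

end FiniteSections

section Branches

variable {x y : ℕ → Bool} {S : Set (List Bool)}

theorem length_seg (x : ℕ → Bool) (m : ℕ) : (seg x m).length = m :=
  List.length_ofFn

theorem seg_injective (x : ℕ → Bool) : Function.Injective (seg x) :=
  Function.LeftInverse.injective (length_seg x)

theorem getElem?_seg {m i : ℕ} (hi : i < m) : (seg x m)[i]? = some (x i) := by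
  simp [seg, hi]

theorem seg_prefix_seg {m n : ℕ} (h : m ≤ n) : seg x m <+: seg x n := by
  refine List.prefix_iff_getElem.mpr ⟨by simpa only [length_seg], fun i hi => ?_⟩
  simp [seg]

theorem isChain_range_seg (x : ℕ → Bool) : IsChain (· <+: ·) (range (seg x)) := by
  rintro _ ⟨m, rfl⟩ _ ⟨n, rfl⟩ -
  exact (le_total m n).imp seg_prefix_seg seg_prefix_seg

theorem finite_range_seg_inter_range_seg (h : x ≠ y) :
    (range (seg x) ∩ range (seg y)).Finite := by
  obtain ⟨i, hi⟩ := Function.ne_iff.mp h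
  refine ((finite_le_nat i).image (seg x)).subset ?_
  rintro _ ⟨⟨m, rfl⟩, n, hn⟩
  obtain rfl : n = m := by simpa only [length_seg] using congrArg List.length hn
  refine ⟨n, (not_lt.mp fun hin => hi ?_ : n ≤ i), rfl⟩
  rw [← Option.some_inj, ← getElem?_seg hin, ← getElem?_seg hin, hn]

theorem exists_subset_range_seg_of_isChain (hS : IsChain (· <+: ·) S) :
    ∃ x, S ⊆ range (seg x) := by
  classical
  refine ⟨fun i => decide (∃ t ∈ S, t[i]? = some true), fun s hs => ⟨s.length, ?_⟩⟩
  refine List.ext_getElem (length_seg _ _) fun i _ hi => ?_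
  have hagree : (∃ t ∈ S, t[i]? = some true) ↔ s[i]? = some true := by
    refine ⟨?_, fun h => ⟨s, hs, h⟩⟩
    rintro ⟨t, ht, hti⟩
    obtain ⟨hi', hti⟩ := List.getElem?_eq_some_iff.mp hti
    rcases hS.total hs ht with hst | hts
    · rw [List.getElem?_eq_getElem hi, hst.getElem hi, hti]
    · rw [List.getElem?_eq_getElem hi, ← hts.getElem hi', hti]
  simp [seg, hagree, hi]

theorem measurableSet_seg_eq (m : ℕ) (s : List Bool) :
    MeasurableSet {x : ℕ → Bool | seg x m = s} := by
  have hrestrict : Measurable fun (x : ℕ → Bool) (i : Fin m) => x i := by fun_prop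
  exact hrestrict (toFinite {v | List.ofFn v = s}).measurableSet

theorem measurableSet_mem_range_seg (s : List Bool) :
    MeasurableSet {x : ℕ → Bool | s ∈ range (seg x)} := by
  simp only [mem_range, ofPred_exists]
  exact .iUnion fun m => measurableSet_seg_eq m s

theorem measurable_suppB {α : Type} : Measurable (suppB : (α → Bool) → Set α) :=
  measurable_set_iff.mpr fun a => by
    simp only [suppB, mem_ofPred_eq]
    fun_prop

theorem measurable_preimage_seg :
    Measurable fun p : Set (List Bool) × (ℕ → Bool) => seg p.2 ⁻¹' p.1 := by
  refine measurable_set_iff.mpr fun m => measurableSet_setOfPred.mp ?_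
  have heq : {p : Set (List Bool) × (ℕ → Bool) | m ∈ seg p.2 ⁻¹' p.1} =
      ⋃ s : List Bool, {S | s ∈ S} ×ˢ {x | seg x m = s} := by
    ext p
    simp
  rw [heq]
  exact .iUnion fun s => (measurableSet_mem s).prod (measurableSet_seg_eq m s)

end Branches

section BranchDecomposition

variable {c : (ℕ → Bool) → ℕ → ℕ} {S : Set (List Bool)} {X : Set (ℕ → Bool)}

theorem genIc_iff :
    GenIc c S ↔ IsAntichain (· <+: ·) S ∨ (∃ x n, S = seg x '' (c x ⁻¹' {n})) ∨
      ∃ x A, InjOn (c x) A ∧ S = seg x '' A := by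
  refine or_congr ?_ (or_congr ?_ ?_)
  · refine ⟨fun h a ha b hb hab => (h a ha b hb hab).1, fun h a ha b hb hab => ?_⟩
    exact ⟨h ha hb hab, h hb ha hab.symm⟩
  · have heq (x n) : {s | ∃ m, c x m = n ∧ s = seg x m} = seg x '' (c x ⁻¹' {n}) := by
      ext s
      simp [eq_comm]
    simp only [heq]
  · refine exists_congr fun x => ⟨?_, ?_⟩
    · rintro ⟨hS, hsub⟩
      refine ⟨seg x ⁻¹' S, fun m hm k hk hmk => seg_injective x ?_, ?_⟩
      · exact hsub _ ⟨hm, m, rfl, rfl⟩ ⟨hk, k, hmk.symm, rfl⟩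
      · exact (image_preimage_eq_of_subset fun s hs => (hS s hs).imp fun _ => Eq.symm).symm
    · rintro ⟨A, hA, rfl⟩
      refine ⟨fun s hs => hs.imp fun m hm => hm.2.symm, fun n => ?_⟩
      rintro _ ⟨⟨m, hm, rfl⟩, m', hm', he⟩ _ ⟨⟨k, hk, rfl⟩, k', hk', he'⟩
      obtain rfl := seg_injective x he
      obtain rfl := seg_injective x he'
      rw [hA hm hk (hm'.trans hk'.symm)]

theorem mem_idealIc_iff {y : List Bool → Bool} :
    y ∈ IdealIc c ↔ GeneratedIdeal (GenIc c) (suppB y) := by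
  constructor
  · rintro ⟨k, F, hF, hy⟩
    refine (GeneratedIdeal.biUnion finite_univ fun i _ => .basic (hF i)).mono fun s hs => ?_
    simpa using hy s hs
  · intro h
    obtain ⟨T, hT, hG, hcover⟩ := h.exists_finite_cover
    obtain ⟨k, F, -, rfl⟩ := hT.fin_param
    exact ⟨k, F, fun i => hG _ (mem_range_self i), fun s hs => by simpa using hcover hs⟩

/-- The set `X` of branches witnesses that `S` belongs to `I_c`: it consists of branches through
which `S` passes infinitely often, the trace of `S` on each of them is small relative to the
partition given by `c`, and chains in the remainder of `S` have bounded length. -/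
structure IsBranchDecomposition (c : (ℕ → Bool) → ℕ → ℕ) (S : Set (List Bool))
    (X : Set (ℕ → Bool)) : Prop where
  infinite_trace : ∀ x ∈ X, (seg x ⁻¹' S).Infinite
  boundedFibers_trace : ∀ x ∈ X, HasEventuallyBoundedFibers (c x) (seg x ⁻¹' S)
  chainHeight_ne_top : (S \ ⋃ x ∈ X, range (seg x)).chainHeight (· <+: ·) ≠ ⊤

theorem GeneratedIdeal.boundedFibers_trace (hS : GeneratedIdeal (GenIc c) S) (x : ℕ → Bool) :
    HasEventuallyBoundedFibers (c x) (seg x ⁻¹' S) := by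
  have other_branch {y : ℕ → Bool} (hyx : y ≠ x) (A : Set ℕ) :
      HasEventuallyBoundedFibers (c x) (seg x ⁻¹' (seg y '' A)) := by
    refine .of_finite (.subset ((finite_range_seg_inter_range_seg hyx).preimage
      (seg_injective x).injOn) fun m hm => ⟨image_subset_range _ _ hm, m, rfl⟩)
  induction hS with
  | basic hG =>
    rcases genIc_iff.mp hG with hanti | ⟨y, n, rfl⟩ | ⟨y, A, hA, rfl⟩
    · refine .of_finite (Set.Subsingleton.finite ?_)
      have hsub := inter_subsingleton_of_isAntichain_of_isChain hanti (isChain_range_seg x)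
      exact fun m hm k hk => seg_injective x (hsub ⟨hm, m, rfl⟩ ⟨hk, k, rfl⟩)
    · by_cases hyx : y = x
      · subst hyx
        rw [preimage_image_eq _ (seg_injective y)]
        exact .preimage_singleton n
      · exact other_branch hyx _
    · by_cases hyx : y = x
      · subst hyx
        rw [preimage_image_eq _ (seg_injective y)]
        exact .of_injOn hA
      · exact other_branch hyx _
  | empty => exact .of_finite finite_empty
  | mono _ hsub ih => exact ih.mono (preimage_mono hsub)
  | union _ _ ih ih' => exact ih.union ih'

theorem GeneratedIdeal.exists_finite_branches (hS : GeneratedIdeal (GenIc c) S) :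
    ∃ X : Set (ℕ → Bool), X.Finite ∧
      (S \ ⋃ x ∈ X, range (seg x)).chainHeight (· <+: ·) ≠ ⊤ := by
  have on_branch (x : ℕ → Bool) (A : Set ℕ) : ∃ X : Set (ℕ → Bool), X.Finite ∧
      (seg x '' A \ ⋃ x ∈ X, range (seg x)).chainHeight (· <+: ·) ≠ ⊤ := by
    refine ⟨{x}, finite_singleton x, ?_⟩
    simp [sdiff_eq_empty.mpr (image_subset_range (seg x) A)]
  induction hS with
  | basic hG =>
    rcases genIc_iff.mp hG with hanti | ⟨x, n, rfl⟩ | ⟨x, A, -, rfl⟩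
    · exact ⟨∅, finite_empty, chainHeight_ne_top_of_isAntichain (hanti.subset sdiff_subset)⟩
    · exact on_branch x _
    · exact on_branch x A
  | empty => exact ⟨∅, finite_empty, by simp⟩
  | mono _ hsub ih =>
    obtain ⟨X, hX, hheight⟩ := ih
    exact ⟨X, hX, chainHeight_ne_top_mono hheight (sdiff_subset_sdiff_left hsub)⟩
  | union _ _ ih ih' =>
    obtain ⟨X, hX, hheight⟩ := ih
    obtain ⟨X', hX', hheight'⟩ := ih'
    refine ⟨X ∪ X', hX.union hX',
      chainHeight_ne_top_mono (chainHeight_union_ne_top hheight hheight') ?_⟩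
    rw [biUnion_union, union_sdiff_distrib]
    exact union_subset_union (sdiff_subset_sdiff_right subset_union_left)
      (sdiff_subset_sdiff_right subset_union_right)

theorem GeneratedIdeal.exists_isBranchDecomposition (hS : GeneratedIdeal (GenIc c) S) :
    ∃ X : Set (ℕ → Bool), X.Finite ∧ IsBranchDecomposition c S X := by
  obtain ⟨X, hX, hheight⟩ := hS.exists_finite_branches
  refine ⟨{x ∈ X | (seg x ⁻¹' S).Infinite}, hX.subset (sep_subset _ _), fun x hx => hx.2,
    fun x _ => hS.boundedFibers_trace x, ?_⟩
  have hfin : (⋃ x ∈ {x ∈ X | (seg x ⁻¹' S).Finite}, seg x '' (seg x ⁻¹' S)).Finite :=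
    (hX.subset (sep_subset _ _)).biUnion fun x hx => hx.2.image _
  refine chainHeight_ne_top_mono
    (chainHeight_union_ne_top hheight (chainHeight_ne_top_of_finite _ _ hfin)) ?_
  rintro s ⟨hs, hoff⟩
  by_cases hsX : s ∈ ⋃ x ∈ X, range (seg x)
  · obtain ⟨x, hx, m, rfl⟩ := mem_iUnion₂.mp hsX
    have hxfin : (seg x ⁻¹' S).Finite := by
      by_contra hinf
      exact hoff (mem_biUnion (⟨hx, hinf⟩ : x ∈ {x ∈ X | _}) ⟨m, rfl⟩)
    exact .inr (mem_biUnion (⟨hx, hxfin⟩ : x ∈ {x ∈ X | _}) ⟨m, hs, rfl⟩)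
  · exact .inl ⟨hs, hsX⟩

theorem IsBranchDecomposition.generatedIdeal (h : IsBranchDecomposition c S X) (hX : X.Finite) :
    GeneratedIdeal (GenIc c) S := by
  have hoff : GeneratedIdeal (GenIc c) (S \ ⋃ x ∈ X, range (seg x)) :=
    (generatedIdeal_isAntichain_of_chainHeight_ne_top h.chainHeight_ne_top).mono_generators
      fun _ hG => genIc_iff.mpr (.inl hG)
  have hon : GeneratedIdeal (GenIc c) (⋃ x ∈ X, seg x '' (seg x ⁻¹' S)) := by
    refine .biUnion hX fun x hx => (h.boundedFibers_trace x hx).generatedIdeal.image fun A hA => ?_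
    rcases hA with ⟨n, rfl⟩ | hinj
    · exact genIc_iff.mpr (.inr (.inl ⟨x, n, rfl⟩))
    · exact genIc_iff.mpr (.inr (.inr ⟨x, A, hinj, rfl⟩))
  refine (hoff.union hon).mono fun s hs => ?_
  by_cases hsX : s ∈ ⋃ x ∈ X, range (seg x)
  · obtain ⟨x, hx, m, rfl⟩ := mem_iUnion₂.mp hsX
    exact .inr (mem_biUnion hx ⟨m, hs, rfl⟩)
  · exact .inl ⟨hs, hsX⟩

theorem mem_of_infinite_preimage_seg {x : ℕ → Bool} (hX : X.Finite)
    (h : (S \ ⋃ x ∈ X, range (seg x)).chainHeight (· <+: ·) ≠ ⊤)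
    (hx : (seg x ⁻¹' S).Infinite) : x ∈ X := by
  by_contra hxX
  have hmeet : (⋃ y ∈ X, range (seg x) ∩ range (seg y)).Finite :=
    hX.biUnion fun y hy => finite_range_seg_inter_range_seg fun hxy => hxX (hxy ▸ hy)
  have hinf : ((range (seg x) ∩ S) \ ⋃ y ∈ X, range (seg x) ∩ range (seg y)).Infinite := by
    rw [← image_preimage_eq_range_inter]
    exact (hx.image (seg_injective x).injOn).sdiff hmeet
  refine hinf (finite_of_chainHeight_ne_top (r := (· <+: ·)) ?_ (chainHeight_ne_top_mono h ?_))
  · exact (isChain_range_seg x).mono fun s hs => hs.1.1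
  · rintro s ⟨⟨hsx, hsS⟩, hs⟩
    rw [← inter_iUnion₂] at hs
    exact ⟨hsS, fun hsX => hs ⟨hsx, hsX⟩⟩

theorem IsBranchDecomposition.eq_setOf_infinite_trace (h : IsBranchDecomposition c S X)
    (hX : X.Finite) : X = {x | (seg x ⁻¹' S).Infinite} :=
  Subset.antisymm h.infinite_trace
    fun _ => mem_of_infinite_preimage_seg hX h.chainHeight_ne_top

theorem isBranchDecomposition_range_iff {ι : Type*} {t : ι → ℕ → Bool} :
    IsBranchDecomposition c S (range t) ↔ (∀ i, (seg (t i) ⁻¹' S).Infinite) ∧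
      (∀ i, HasEventuallyBoundedFibers (c (t i)) (seg (t i) ⁻¹' S)) ∧
      (S \ ⋃ i, range (seg (t i))).chainHeight (· <+: ·) ≠ ⊤ := by
  rw [← biUnion_range (f := t) (g := fun x => range (seg x))]
  exact ⟨fun h => ⟨fun i => h.1 _ (mem_range_self i), fun i => h.2 _ (mem_range_self i), h.3⟩,
    fun h => ⟨forall_mem_range.mpr h.1, forall_mem_range.mpr h.2.1, h.2.2⟩⟩

theorem measurableSet_isBranchDecomposition (hc : Measurable c) (k : ℕ) :
    MeasurableSet {p : (List Bool → Bool) × (Fin k → ℕ → Bool) |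
      IsBranchDecomposition c (suppB p.1) (range p.2)} := by
  have hbranch (i : Fin k) :
      Measurable fun p : (List Bool → Bool) × (Fin k → ℕ → Bool) => p.2 i := by fun_prop
  have htrace (i : Fin k) : Measurable fun p : (List Bool → Bool) × (Fin k → ℕ → Bool) =>
      seg (p.2 i) ⁻¹' suppB p.1 :=
    measurable_preimage_seg.comp ((measurable_suppB.comp measurable_fst).prodMk (hbranch i))
  have hoff : Measurable fun p : (List Bool → Bool) × (Fin k → ℕ → Bool) =>
      suppB p.1 \ ⋃ i, range (seg (p.2 i)) := by
    refine measurable_set_iff.mpr fun s => ?_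
    simp only [mem_sdiff, mem_iUnion]
    refine (measurable_set_iff.mp (measurable_suppB.comp measurable_fst) s).and
      (Measurable.exists fun i => ?_).not
    exact measurableSet_setOfPred.mp (hbranch i (measurableSet_mem_range_seg s))
  have hdef : {p : (List Bool → Bool) × (Fin k → ℕ → Bool) |
      IsBranchDecomposition c (suppB p.1) (range p.2)} =
      (⋂ i, {p | (seg (p.2 i) ⁻¹' suppB p.1).encard = ⊤}) ∩
      (⋂ i, {p | HasEventuallyBoundedFibers (c (p.2 i)) (seg (p.2 i) ⁻¹' suppB p.1)}) ∩
      {p | (suppB p.1 \ ⋃ i, range (seg (p.2 i))).chainHeight (· <+: ·) = ⊤}ᶜ := by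
    ext p
    simp [isBranchDecomposition_range_iff, and_assoc]
  rw [hdef]
  refine ((MeasurableSet.iInter fun i => ?_).inter (.iInter fun i => ?_)).inter
    (hoff measurableSet_chainHeight_eq_top).compl
  · exact measurable_encard.comp (htrace i) (measurableSet_singleton ⊤)
  · exact measurableSet_hasEventuallyBoundedFibers (htrace i) (hc.comp (hbranch i))

theorem measurableSet_idealIc (hc : Measurable c) : MeasurableSet (IdealIc c) := by
  have heq : IdealIc c = {y | ∃ X, X.Finite ∧ IsBranchDecomposition c (suppB y) X} := by
    ext y
    rw [mem_idealIc_iff]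
    exact ⟨fun h => h.exists_isBranchDecomposition, fun ⟨_, hX, h⟩ => h.generatedIdeal hX⟩
  rw [heq]
  refine measurableSet_exists_finite_of_unique (measurableSet_isBranchDecomposition hc) ?_
  intro y X X' hX hX' h h'
  rw [h.eq_setOf_infinite_trace hX, h'.eq_setOf_infinite_trace hX']

end BranchDecomposition

section Tall

variable {S : Set (List Bool)}

theorem exists_infinite_generatedIdeal_of_infinite_trace (c : (ℕ → Bool) → ℕ → ℕ) {x : ℕ → Bool}
    (hx : (seg x ⁻¹' S).Infinite) : ∃ T ⊆ S, T.Infinite ∧ GeneratedIdeal (GenIc c) T := by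
  suffices ∃ A ⊆ seg x ⁻¹' S, A.Infinite ∧ GeneratedIdeal (GenIc c) (seg x '' A) by
    obtain ⟨A, hAS, hA, hgen⟩ := this
    exact ⟨_, image_subset_iff.mpr hAS, hA.image (seg_injective x).injOn, hgen⟩
  rcases exists_infinite_fiber_or_infinite_injOn (f := c x) hx with ⟨n, hn⟩ | ⟨A, hAS, hA, hinj⟩
  · exact ⟨_, inter_subset_left, hn, .mono
      (.basic (genIc_iff.mpr (.inr (.inl ⟨x, n, rfl⟩)))) (image_mono inter_subset_right)⟩
  · exact ⟨A, hAS, hA, .basic (genIc_iff.mpr (.inr (.inr ⟨x, A, hinj, rfl⟩)))⟩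

theorem exists_infinite_subset_generatedIdeal (c : (ℕ → Bool) → ℕ → ℕ) (hS : S.Infinite) :
    ∃ T ⊆ S, T.Infinite ∧ GeneratedIdeal (GenIc c) T := by
  obtain ⟨T, hTS, hT, hchain | hanti⟩ :=
    exists_infinite_isChain_or_isAntichain (r := (· <+: ·)) hS
  · obtain ⟨x, hx⟩ := exists_subset_range_seg_of_isChain hchain
    exact exists_infinite_generatedIdeal_of_infinite_trace c
      ((hT.preimage hx).mono (preimage_mono hTS))
  · exact ⟨T, hTS, hT, .basic (genIc_iff.mpr (.inl hanti))⟩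

end Tall

theorem isIdealB_idealIc (c : (ℕ → Bool) → ℕ → ℕ) : IsIdealB (IdealIc c) := by
  refine ⟨fun y hy z hzy => ?_, fun y hy z hz => ?_⟩
  · exact mem_idealIc_iff.mpr ((mem_idealIc_iff.mp hy).mono hzy)
  · refine mem_idealIc_iff.mpr (((mem_idealIc_iff.mp hy).union (mem_idealIc_iff.mp hz)).mono ?_)
    intro s hs
    simpa [suppB, unionB] using hs

theorem isTallB_idealIc (c : (ℕ → Bool) → ℕ → ℕ) : IsTallB (IdealIc c) := by
  classical
  intro y hy
  obtain ⟨T, hTy, hT, hgen⟩ := exists_infinite_subset_generatedIdeal c hy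
  have hsupp : suppB (fun s => decide (s ∈ T)) = T := by
    ext s
    simp [suppB]
  refine ⟨fun s => decide (s ∈ T), ?_, ?_, fun s hs => hTy (by simpa using hs)⟩
  · rwa [mem_idealIc_iff, hsupp]
  · rwa [InfiniteB, hsupp]

/-- For every Borel function `c : 2^ℕ → ℕ^ℕ`, the ideal `I_c` is a tall Borel ideal
on `2^{<ω}`. -/
theorem idealIc_tall_borel (c : (ℕ → Bool) → (ℕ → ℕ)) (hc : Measurable c) :
    IsIdealB (IdealIc c) ∧ IsTallB (IdealIc c) ∧ MeasurableSet (IdealIc c) :=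
  ⟨isIdealB_idealIc c, isTallB_idealIc c, measurableSet_idealIc hc⟩
end
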